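/- arXiv:1710.04680 — 6 statements merged into one kernel-verified Lean document; each statement's English description precedes it below -/
import Mathlib

section
/- Let k ≥ 6 and n ≥ 2((k − 1)² + 1). Then there exist three matrices M₁, M₂, M₃ in the integral symplectic group Sp(2n, ℤ), each of order exactly k, such that the subgroup they generate is all of Sp(2n, ℤ). -/
namespace SpGen

open Matrix

section Basics

variable {ι : Type} [Fintype ι] [DecidableEq ι]

abbrev V (ι : Type) : Type := ι ⊕ ι → ℤ

abbrev Sp (ι : Type) [Fintype ι] [DecidableEq ι] : Type := Matrix.symplecticGroup ι ℤ

/-- The symplectic form. -/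
def om (x y : V ι) : ℤ := ∑ i, (x (Sum.inl i) * y (Sum.inr i) - x (Sum.inr i) * y (Sum.inl i))

theorem om_add_left (x y z : V ι) : om (x + y) z = om x z + om y z := by
  simp only [om, ← Finset.sum_add_distrib, Pi.add_apply]
  exact Finset.sum_congr rfl fun _ _ => by ring

theorem om_smul_left (c : ℤ) (x z : V ι) : om (c • x) z = c * om x z := by
  simp only [om, Finset.mul_sum, Pi.smul_apply, smul_eq_mul]
  exact Finset.sum_congr rfl fun _ _ => by ring

theorem om_swap (x y : V ι) : om x y = - om y x := by
  simp only [om, ← Finset.sum_neg_distrib]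
  exact Finset.sum_congr rfl fun _ _ => by ring

theorem om_self (x : V ι) : om x x = 0 := by
  have := om_swap x x
  omega

theorem om_add_right (x y z : V ι) : om x (y + z) = om x y + om x z := by
  rw [om_swap, om_add_left, om_swap y, om_swap z]; ring

theorem om_smul_right (c : ℤ) (x z : V ι) : om x (c • z) = c * om x z := by
  rw [om_swap, om_smul_left, om_swap z]; ring

theorem om_neg_left (x z : V ι) : om (-x) z = - om x z := by
  have := om_smul_left (-1) x z
  simpa using this

theorem om_neg_right (x z : V ι) : om x (-z) = - om x z := by
  have := om_smul_right (-1) x z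
  simpa using this

/-- Basis vectors. -/
def b (c : ι ⊕ ι) : V ι := Pi.single c 1

def e (i : ι) : V ι := b (Sum.inl i)
def f (i : ι) : V ι := b (Sum.inr i)

theorem om_e (x : V ι) (i : ι) : om x (e i) = - x (Sum.inr i) := by
  simp [om, e, b, Pi.single_apply]

theorem om_f (x : V ι) (i : ι) : om x (f i) = x (Sum.inl i) := by
  simp [om, f, b, Pi.single_apply]

theorem om_ee (i j : ι) : om (e i) (e j) = 0 := by
  rw [om_e]; simp [e, b]

theorem om_ff (i j : ι) : om (f i) (f j) = 0 := by
  rw [om_f]; simp [f, b]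

theorem om_ef (i j : ι) : om (e i) (f j) = if i = j then 1 else 0 := by
  rw [om_f]; simp [e, b, Pi.single_apply, eq_comm]

theorem om_fe (i j : ι) : om (f i) (e j) = if i = j then -1 else 0 := by
  rw [om_e]; simp [f, b, Pi.single_apply, eq_comm]; split_ifs <;> simp

theorem om_eq_J (x y : V ι) : om x y = - (x ⬝ᵥ (J ι ℤ *ᵥ y)) := by
  simp [om, J, dotProduct, Matrix.fromBlocks_mulVec, Fintype.sum_sum_type,
    Matrix.neg_mulVec, Finset.sum_add_distrib, sub_eq_add_neg, add_comm]

/-- action on vectors -/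
def ac (g : Sp ι) (v : V ι) : V ι := (g : Matrix (ι ⊕ ι) (ι ⊕ ι) ℤ) *ᵥ v

theorem ac_one (v : V ι) : ac 1 v = v := by simp [ac]
theorem ac_mul (g h : Sp ι) (v : V ι) : ac (g * h) v = ac g (ac h v) := by
  simp [ac, Matrix.mulVec_mulVec]
theorem ac_inv_ac (g : Sp ι) (v : V ι) : ac g⁻¹ (ac g v) = v := by
  rw [← ac_mul, inv_mul_cancel, ac_one]
theorem ac_ac_inv (g : Sp ι) (v : V ι) : ac g (ac g⁻¹ v) = v := by
  rw [← ac_mul, mul_inv_cancel, ac_one]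
theorem ac_add (g : Sp ι) (v w : V ι) : ac g (v + w) = ac g v + ac g w := by
  simp [ac, Matrix.mulVec_add]
theorem ac_smul (g : Sp ι) (c : ℤ) (w : V ι) : ac g (c • w) = c • ac g w := by
  rw [ac, Matrix.mulVec_smul]; rfl
theorem ac_neg (g : Sp ι) (w : V ι) : ac g (-w) = - ac g w := by
  simp [ac, Matrix.mulVec_neg]
theorem ac_sub (g : Sp ι) (v w : V ι) : ac g (v - w) = ac g v - ac g w := by
  simp [ac, Matrix.mulVec_sub]
theorem ac_inv_eq {g : Sp ι} {v w : V ι} (h : ac g v = w) : ac g⁻¹ w = v := by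
  rw [← h, ac_inv_ac]

theorem ac_ext {g h : Sp ι} (H : ∀ v, ac g v = ac h v) : g = h := by
  apply Subtype.ext
  exact Matrix.mulVec_injective (funext H)

theorem ac_ext_b {g h : Sp ι} (H : ∀ c, ac g (b c) = ac h (b c)) : g = h := by
  apply Subtype.ext
  ext i j
  have := congrFun (H j) i
  simpa [ac, b] using this

theorem ac_ext_ef {g h : Sp ι} (H : ∀ i, ac g (e i) = ac h (e i))
    (H' : ∀ i, ac g (f i) = ac h (f i)) : g = h := by
  apply ac_ext_b
  rintro (i | i)
  · exact H i
  · exact H' i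

theorem om_ac (g : Sp ι) (x y : V ι) : om (ac g x) (ac g y) = om x y := by
  have hg := SymplecticGroup.mem_iff'.1 g.2
  rw [om_eq_J, om_eq_J, ac, ac, Matrix.mulVec_mulVec, Matrix.dotProduct_mulVec,
    Matrix.vecMul_mulVec, ← Matrix.dotProduct_mulVec, ← Matrix.mul_assoc, hg]

theorem exists_sp (F : V ι →ₗ[ℤ] V ι) (h : ∀ x y, om (F x) (F y) = om x y) :
    ∃ g : Sp ι, ∀ v, ac g v = F v := by
  have hF : ∀ v, LinearMap.toMatrix' F *ᵥ v = F v := fun v => by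
    rw [← Matrix.toLin'_apply, Matrix.toLin'_toMatrix']
  refine ⟨⟨LinearMap.toMatrix' F, ?_⟩, hF⟩
  rw [SymplecticGroup.mem_iff']
  ext i j
  have := h (Pi.single i 1) (Pi.single j 1)
  rw [← hF, ← hF, om_eq_J, om_eq_J, Matrix.mulVec_mulVec, Matrix.dotProduct_mulVec,
    Matrix.vecMul_mulVec, ← Matrix.dotProduct_mulVec, ← Matrix.mul_assoc] at this
  simpa using this

/-- transvection as a linear map -/
def TL (v : V ι) : V ι →ₗ[ℤ] V ι where
  toFun x := x + om x v • v
  map_add' x y := by rw [om_add_left, add_smul]; abel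
  map_smul' c x := by
    rw [om_smul_left, mul_smul, smul_add, RingHom.id_apply]

theorem om_TL (v x y : V ι) : om (TL v x) (TL v y) = om x y := by
  simp only [TL, LinearMap.coe_mk, AddHom.coe_mk, om_add_left, om_add_right, om_smul_left,
    om_smul_right, om_self]
  rw [om_swap v y]; ring

noncomputable def T (v : V ι) : Sp ι := (exists_sp (TL v) (om_TL v)).choose

theorem ac_T (v x : V ι) : ac (T v) x = x + om x v • v :=
  (exists_sp (TL v) (om_TL v)).choose_spec x

theorem ac_T_inv (v x : V ι) : ac (T v)⁻¹ x = x - om x v • v := by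
  apply ac_inv_eq
  rw [ac_T, sub_eq_add_neg, om_add_left, om_neg_left, om_smul_left, om_self]
  simp

theorem conj_T (g : Sp ι) (v : V ι) : g * T v * g⁻¹ = T (ac g v) := by
  apply ac_ext
  intro x
  rw [ac_mul, ac_mul, ac_T, ac_T, ac_add, ac_smul, ac_ac_inv]
  congr 2
  rw [← om_ac g, ac_ac_inv]

noncomputable def X (p q : V ι) : Sp ι := T (p + q) * (T p)⁻¹ * (T q)⁻¹

theorem conj_X (g : Sp ι) (p q : V ι) : g * X p q * g⁻¹ = X (ac g p) (ac g q) := by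
  simp only [X, ← ac_add, ← conj_T]; group

theorem ac_X {p q : V ι} (h : om p q = 0) (x : V ι) :
    ac (X p q) x = x + om x p • q + om x q • p := by
  have h' : om q p = 0 := by rw [om_swap, h]; rfl
  simp only [X, ac_mul, ac_T, ac_T_inv, sub_eq_add_neg, om_add_left, om_neg_left, om_smul_left,
    om_add_right, om_self, h, h']
  module

theorem ac_X_inv {p q : V ι} (h : om p q = 0) (x : V ι) :
    ac (X p q)⁻¹ x = x - om x p • q - om x q • p := by
  have h' : om q p = 0 := by rw [om_swap, h]; rfl
  apply ac_inv_eq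
  simp only [ac_X h, sub_eq_add_neg, om_add_left, om_neg_left, om_smul_left,
    om_add_right, om_self, h, h']
  module

theorem X_comm {p q : V ι} (h : om p q = 0) : X p q = X q p := by
  have h' : om q p = 0 := by rw [om_swap, h]; rfl
  apply ac_ext; intro x
  rw [ac_X h, ac_X h']; abel

theorem X_neg_left {p q : V ι} (h : om p q = 0) : X (-p) q = (X p q)⁻¹ := by
  have h' : om (-p) q = 0 := by rw [om_neg_left, h]; rfl
  apply ac_ext; intro x
  rw [ac_X h', ac_X_inv h, om_neg_right]; module

theorem X_neg_right {p q : V ι} (h : om p q = 0) : X p (-q) = (X p q)⁻¹ := by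
  have h' : om p (-q) = 0 := by rw [om_neg_right, h]; rfl
  apply ac_ext; intro x
  rw [ac_X h', ac_X_inv h, om_neg_right]; module

theorem T_neg (p : V ι) : T (-p) = T p := by
  apply ac_ext; intro x
  rw [ac_T, ac_T, om_neg_right]; module

/-- heisenberg relation -/
theorem X_add {p p' q : V ι} (h : om p q = 0) (h' : om p' q = 0) (h1 : om p p' = 1) :
    X (p + p') q * (X p q)⁻¹ * (X p' q)⁻¹ = T q ∨ X (p + p') q * (X p q)⁻¹ * (X p' q)⁻¹ = (T q)⁻¹ := by
  have h0 : om (p + p') q = 0 := by rw [om_add_left, h, h']; rfl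
  have hq : om q p = 0 := by rw [om_swap, h]; rfl
  have hq' : om q p' = 0 := by rw [om_swap, h']; rfl
  have h2 : om p' p = -1 := by rw [om_swap, h1]
  right
  apply ac_ext; intro x
  simp only [ac_mul, ac_X h0, ac_X_inv h, ac_X_inv h', ac_T, ac_T_inv, sub_eq_add_neg, om_add_left, om_neg_left, om_smul_left,
    om_add_right, om_self, h, h', h1, h2, hq, hq']
  module

/-- commutator relation -/
theorem X_commutator {p q p' q' : V ι} (h : om p q = 0) (h' : om p' q' = 0) (h1 : om q p' = 1)
    (hpp : om p p' = 0) (hpq : om p q' = 0) (hqq : om q q' = 0) :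
    X p q * X p' q' * (X p q)⁻¹ * (X p' q')⁻¹ = (X p q')⁻¹ := by
  have k1 : om q p = 0 := by rw [om_swap, h]; rfl
  have k2 : om q' p' = 0 := by rw [om_swap, h']; rfl
  have k3 : om p' q = -1 := by rw [om_swap, h1]
  have k4 : om p' p = 0 := by rw [om_swap, hpp]; rfl
  have k5 : om q' p = 0 := by rw [om_swap, hpq]; rfl
  have k6 : om q' q = 0 := by rw [om_swap, hqq]; rfl
  apply ac_ext; intro x
  simp only [ac_mul, ac_X h, ac_X h', ac_X_inv h, ac_X_inv h', ac_X_inv hpq, sub_eq_add_neg, om_add_left, om_neg_left, om_smul_left,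
    om_add_right, om_self, h, h', h1, hpp, hpq, hqq, k1, k2, k3, k4, k5, k6]
  module

/-- commuting -/
theorem X_commute {p q p' q' : V ι} (h : om p q = 0) (h' : om p' q' = 0) (h1 : om q p' = 0)
    (hpp : om p p' = 0) (hpq : om p q' = 0) (hqq : om q q' = 0) :
    Commute (X p q) (X p' q') := by
  have k3 : om p' q = 0 := by rw [om_swap, h1]; rfl
  have k4 : om p' p = 0 := by rw [om_swap, hpp]; rfl
  have k5 : om q' p = 0 := by rw [om_swap, hpq]; rfl
  have k6 : om q' q = 0 := by rw [om_swap, hqq]; rfl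
  apply ac_ext; intro x
  simp only [ac_mul, ac_X h, ac_X h', om_add_left, om_smul_left,
    h1, hpp, hpq, hqq, k3, k4, k5, k6]
  module

/-- permutations -/
def PL (π : Equiv.Perm ι) : V ι →ₗ[ℤ] V ι where
  toFun x := fun c => x (Sum.map π.symm π.symm c)
  map_add' x y := rfl
  map_smul' c x := rfl

theorem om_PL (π : Equiv.Perm ι) (x y : V ι) : om (PL π x) (PL π y) = om x y := by
  simp only [om, PL, LinearMap.coe_mk, AddHom.coe_mk, Sum.map_inl, Sum.map_inr]
  exact Equiv.sum_comp π.symm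
    (fun i => x (Sum.inl i) * y (Sum.inr i) - x (Sum.inr i) * y (Sum.inl i))

noncomputable def perm (π : Equiv.Perm ι) : Sp ι := (exists_sp (PL π) (om_PL π)).choose

theorem ac_perm (π : Equiv.Perm ι) (v : V ι) :
    ac (perm π) v = fun c => v (Sum.map π.symm π.symm c) :=
  (exists_sp (PL π) (om_PL π)).choose_spec v

theorem ac_perm_e (π : Equiv.Perm ι) (i : ι) : ac (perm π) (e i) = e (π i) := by
  rw [ac_perm]; ext (c | c) <;> simp [e, b, Pi.single_apply, Equiv.symm_apply_eq]

theorem ac_perm_f (π : Equiv.Perm ι) (i : ι) : ac (perm π) (f i) = f (π i) := by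
  rw [ac_perm]; ext (c | c) <;> simp [f, b, Pi.single_apply, Equiv.symm_apply_eq]

theorem perm_mul (π σ : Equiv.Perm ι) : perm (π * σ) = perm π * perm σ := by
  apply ac_ext_ef <;> intro i <;> simp [ac_mul, ac_perm_e, ac_perm_f]

theorem perm_one : perm (1 : Equiv.Perm ι) = 1 := by
  apply ac_ext_ef <;> intro i <;> simp [ac_one, ac_perm_e, ac_perm_f]

noncomputable def permHom : Equiv.Perm ι →* Sp ι where
  toFun := perm
  map_one' := perm_one
  map_mul' := perm_mul

theorem e_inj {i j : ι} (h : e i = e j) : i = j := by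
  by_contra hne
  have := congrFun h (Sum.inl i)
  simp [e, b, Pi.single_apply, hne] at this

theorem permHom_injective : Function.Injective (permHom (ι := ι)) := by
  intro π σ h
  ext i
  apply e_inj
  rw [← ac_perm_e, ← ac_perm_e]
  exact congrArg (fun g => ac g (e i)) h

theorem perm_inv (π : Equiv.Perm ι) : perm π⁻¹ = (perm π)⁻¹ := map_inv permHom π

theorem orderOf_perm (π : Equiv.Perm ι) : orderOf (perm π) = orderOf π :=
  orderOf_injective permHom permHom_injective π

end Basics

end SpGen
namespace SpGen
open Matrix
section Gen
variable {ι : Type} [Fintype ι] [DecidableEq ι]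

def idx (c : ι ⊕ ι) : ι := Sum.elim id id c

theorem idx_swap (c : ι ⊕ ι) : idx c.swap = idx c := by cases c <;> rfl

theorem eq_or_swap {c d : ι ⊕ ι} (h : idx c = idx d) : c = d ∨ c = d.swap := by
  rcases c with c | c <;> rcases d with d | d <;> simp_all [idx]

def sg (c : ι ⊕ ι) : ℤ := Sum.elim (fun _ => -1) (fun _ => 1) c

theorem sg_cases (c : ι ⊕ ι) : sg c = 1 ∨ sg c = -1 := by cases c <;> simp [sg]

theorem sg_swap (c : ι ⊕ ι) : sg c.swap = - sg c := by cases c <;> simp [sg]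

theorem om_b (x : V ι) (c : ι ⊕ ι) : om x (b c) = sg c * x c.swap := by
  rcases c with i | i
  · have := om_e x i
    simpa [sg, e] using this
  · have := om_f x i
    simpa [sg, f] using this

theorem b_apply (c d : ι ⊕ ι) : b c d = if d = c then 1 else 0 := by
  simp [b, Pi.single_apply]

theorem swap_ne (c : ι ⊕ ι) : c.swap ≠ c := by cases c <;> simp

theorem om_bb {c d : ι ⊕ ι} (h : d ≠ c.swap) : om (b c) (b d) = 0 := by
  rw [om_b, b_apply, if_neg, mul_zero]
  intro h'
  apply h
  rw [← h', Sum.swap_swap]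

theorem om_b_swap (c : ι ⊕ ι) : om (b c) (b c.swap) = - sg c := by
  rw [om_b, b_apply, if_pos (Sum.swap_swap c), sg_swap, mul_one]

theorem exists_min (K : Subgroup (Sp ι)) (v : V ι) (N : V ι → ℕ) :
    ∃ g ∈ K, ∀ h ∈ K, N (ac g v) ≤ N (ac h (ac g v)) := by
  classical
  have hex : ∃ n, ∃ g ∈ K, N (ac g v) = n := ⟨_, 1, K.one_mem, rfl⟩
  obtain ⟨g, hg, hn⟩ := Nat.find_spec hex
  refine ⟨g, hg, fun h hh => ?_⟩
  rw [hn]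
  apply Nat.find_min' hex
  exact ⟨h * g, K.mul_mem hh hg, by rw [ac_mul]⟩

theorem sum_lt {s : Finset (ι ⊕ ι)} {v w : V ι} {c : ι ⊕ ι} (hc : c ∈ s)
    (h1 : (w c).natAbs < (v c).natAbs) (h2 : ∀ d ∈ s, d ≠ c → w d = v d) :
    ∑ d ∈ s, (w d).natAbs < ∑ d ∈ s, (v d).natAbs := by
  apply Finset.sum_lt_sum
  · intro d hd
    by_cases h : d = c
    · subst h; exact h1.le
    · rw [h2 d hd h]
  · exact ⟨c, hc, h1⟩

variable {K : Subgroup (Sp ι)} {S : Finset ι}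

theorem reach_multiple (hT : ∀ c, idx c ∈ S → T (b c) ∈ K)
    (hX : ∀ c d, idx c ∈ S → idx d ∈ S → d ≠ c → d ≠ c.swap → X (b c) (b d) ∈ K)
    (hfix : ∀ g ∈ K, ∀ c, idx c ∉ S → ac g (b c) = b c)
    (v : V ι) (hv : ∀ c, idx c ∉ S → v c = 0) :
    ∃ g ∈ K, ∀ c d, c ≠ d → ac g v c = 0 ∨ ac g v d = 0 := by
  obtain ⟨g, hg, hmin⟩ := exists_min K v (fun v => ∑ c, (v c).natAbs)
  refine ⟨g, hg, ?_⟩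
  have hsupp : ∀ c, idx c ∉ S → ac g v c = 0 := by
    intro c hc
    have h1 : om (ac g v) (b c.swap) = om v (b c.swap) := by
      conv_lhs => rw [← hfix g hg c.swap (by rwa [idx_swap])]
      exact om_ac g _ _
    rw [om_b, om_b, Sum.swap_swap, hv c hc] at h1
    rcases sg_cases c.swap with h | h <;> rw [h] at h1 <;> omega
  set w := ac g v with hw
  have key1 : ∀ c, w c ≠ 0 → w c.swap ≠ 0 → ¬ (w c.swap).natAbs ≤ (w c).natAbs := by
    intro c h1 h2 hle
    have hcS : idx c ∈ S := by
      by_contra hc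
      exact h1 (hsupp c hc)
    have e1 := hmin _ (hT c hcS)
    have e2 := hmin _ (K.inv_mem (hT c hcS))
    rw [ac_T] at e1
    rw [ac_T_inv] at e2
    by_cases hs : (w c + om w (b c)).natAbs < (w c).natAbs
    · refine absurd e1 (not_le.2 (sum_lt (Finset.mem_univ c) ?_ ?_))
      · simpa [b_apply] using hs
      · intro d _ hd; simp [b_apply, hd]
    · refine absurd e2 (not_le.2 (sum_lt (Finset.mem_univ c) ?_ ?_))
      · have : (w c - om w (b c)).natAbs < (w c).natAbs := by
          rw [om_b] at hs ⊢
          rcases sg_cases c with h | h <;> rw [h] at hs ⊢ <;> omega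
        simpa [b_apply] using this
      · intro d _ hd; simp [b_apply, hd]
  have key1' : ∀ c, w c ≠ 0 → w c.swap = 0 := by
    intro c h1
    by_contra h2
    rcases le_total (w c.swap).natAbs (w c).natAbs with h | h
    · exact key1 c h1 h2 h
    · exact key1 c.swap h2 (by rwa [Sum.swap_swap]) (by rwa [Sum.swap_swap])
  have key2 : ∀ c d, c ≠ d → w c ≠ 0 → w d ≠ 0 → ¬ (w d).natAbs ≤ (w c).natAbs := by
    intro c d hcd h1 h2 hle
    have hcS : idx c ∈ S := by
      by_contra hc
      exact h1 (hsupp c hc)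
    have hdS : idx d.swap ∈ S := by
      rw [idx_swap]
      by_contra hc
      exact h2 (hsupp d hc)
    have h3 : d ≠ c.swap := by
      rintro rfl
      exact h2 (key1' c h1)
    have h4 : d.swap ≠ c := by
      rintro rfl
      exact h3 (by rw [Sum.swap_swap])
    have h5 : d.swap ≠ c.swap := by
      intro h
      apply hcd
      rw [← Sum.swap_swap c, ← h, Sum.swap_swap]
    have hm := hX c d.swap hcS hdS h4 h5
    have e1 := hmin _ hm
    have e2 := hmin _ (K.inv_mem hm)
    rw [ac_X (om_bb h5)] at e1
    rw [ac_X_inv (om_bb h5)] at e2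
    have z1 : om w (b c) = 0 := by rw [om_b, key1' c h1, mul_zero]
    by_cases hs : (w c + om w (b d.swap)).natAbs < (w c).natAbs
    · refine absurd e1 (not_le.2 (sum_lt (Finset.mem_univ c) ?_ ?_))
      · simpa [b_apply, z1] using hs
      · intro d _ hd; simp [b_apply, hd, z1]
    · refine absurd e2 (not_le.2 (sum_lt (Finset.mem_univ c) ?_ ?_))
      · have : (w c - om w (b d.swap)).natAbs < (w c).natAbs := by
          rw [om_b, Sum.swap_swap] at hs ⊢
          rcases sg_cases d.swap with h | h <;> rw [h] at hs ⊢ <;> omega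
        simpa [b_apply, z1] using this
      · intro d _ hd; simp [b_apply, hd, z1]
  intro c d hcd
  by_contra! h
  rcases le_total (w d).natAbs (w c).natAbs with h' | h'
  · exact key2 c d hcd h.1 h.2 h'
  · exact key2 d c hcd.symm h.2 h.1 h'

theorem reach_e (hT : ∀ c, idx c ∈ S → T (b c) ∈ K)
    (hX : ∀ c d, idx c ∈ S → idx d ∈ S → d ≠ c → d ≠ c.swap → X (b c) (b d) ∈ K)
    (hfix : ∀ g ∈ K, ∀ c, idx c ∉ S → ac g (b c) = b c)
    (v w : V ι) (hv : ∀ c, idx c ∉ S → v c = 0) (hvw : om v w = 1) (a : ι) (ha : a ∈ S) :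
    ∃ g ∈ K, ac g v = e a := by
  obtain ⟨g, hg, hgv⟩ := reach_multiple hT hX hfix v hv
  -- flip
  have flip : ∀ c, idx c ∈ S → ∃ h ∈ K, ac h (b c) = (- sg c) • b c.swap := by
    intro c hc
    refine ⟨T (b c) * T (b c.swap), K.mul_mem (hT _ hc) (hT _ (by rwa [idx_swap])), ?_⟩
    have h2 : om (b c.swap) (b c) = sg c := by rw [om_swap, om_b_swap, neg_neg]
    rw [ac_mul, ac_T (b c.swap), om_b_swap, ac_T, om_add_left, om_smul_left, om_self, h2]
    rcases sg_cases c with h | h <;> rw [h] <;> module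
  have neg : ∀ c, idx c ∈ S → ∃ h ∈ K, ac h (b c) = - b c := by
    intro c hc
    obtain ⟨h, hh, e1⟩ := flip c hc
    obtain ⟨h', hh', e2⟩ := flip c.swap (by rwa [idx_swap])
    refine ⟨h' * h, K.mul_mem hh' hh, ?_⟩
    rw [ac_mul, e1, ac_smul, e2, sg_swap, Sum.swap_swap]
    rcases sg_cases c with h | h <;> rw [h] <;> module
  have reachB : ∀ c, idx c ∈ S → ∃ h ∈ K, ac h (b c) = e (idx c) := by
    rintro (i | i) hc
    · exact ⟨1, K.one_mem, ac_one _⟩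
    · obtain ⟨h, hh, e1⟩ := flip _ hc
      obtain ⟨h', hh', e2⟩ := neg (Sum.inl i) hc
      refine ⟨h' * h, K.mul_mem hh' hh, ?_⟩
      rw [ac_mul, e1, ac_smul]
      simp only [Sum.swap_inr, e2, sg, Sum.elim_inr]
      simp [e, idx]
  have move : ∀ i ∈ S, ∃ h ∈ K, ac h (e i) = e a := by
    intro i hi
    by_cases hia : i = a
    · subst hia; exact ⟨1, K.one_mem, ac_one _⟩
    have hai : ¬ a = i := fun h => hia h.symm
    have m1 : X (e a) (f i) ∈ K := hX (Sum.inl a) (Sum.inr i) ha hi (by simp) (by simpa using hia)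
    have m2 : X (e i) (f a) ∈ K := hX (Sum.inl i) (Sum.inr a) hi ha (by simp) (by simpa using hai)
    refine ⟨(X (e i) (f a))⁻¹ * X (e a) (f i), K.mul_mem (K.inv_mem m2) m1, ?_⟩
    rw [ac_mul, ac_X (by simp [om_ef, hai]), ac_X_inv (by simp [om_ef, hia])]
    simp [om_add_left, om_ee, om_ef, hia, hai]
  have hprim : om (ac g v) (ac g w) = 1 := by rw [om_ac, hvw]
  have hex : ∃ c, ac g v c ≠ 0 := by
    by_contra! h
    have : ac g v = 0 := funext h
    rw [this] at hprim
    simp [om] at hprim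
  obtain ⟨c, hc⟩ := hex
  have hgc : ac g v = (ac g v c) • b c := by
    ext d
    by_cases hd : d = c
    · subst hd; simp [b_apply]
    · simp only [Pi.smul_apply, b_apply, if_neg hd, smul_zero]
      exact (hgv d c hd).resolve_right hc
  have hcS : idx c ∈ S := by
    by_contra hcS
    apply hc
    have h1 : om (ac g v) (b c.swap) = om v (b c.swap) := by
      conv_lhs => rw [← hfix g hg c.swap (by rwa [idx_swap])]
      exact om_ac g _ _
    rw [om_b, om_b, Sum.swap_swap, hv c hcS] at h1
    rcases sg_cases c.swap with h | h <;> rw [h] at h1 <;> omega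
  have hunit : ac g v c = 1 ∨ ac g v c = -1 := by
    rw [hgc, om_smul_left] at hprim
    exact Int.isUnit_iff.1 (IsUnit.of_mul_eq_one _ hprim)
  have hstep : ∃ h ∈ K, ac h (ac g v) = b c := by
    rcases hunit with hu | hu
    · exact ⟨1, K.one_mem, by rw [ac_one, hgc, hu, one_smul]⟩
    · obtain ⟨h, hh, e1⟩ := neg c hcS
      refine ⟨h, hh, ?_⟩
      rw [hgc, hu, ac_smul, e1]; simp
  obtain ⟨h1, hh1, e1⟩ := hstep
  obtain ⟨h2, hh2, e2⟩ := reachB c hcS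
  obtain ⟨h3, hh3, e3⟩ := move (idx c) hcS
  exact ⟨h3 * (h2 * (h1 * g)), K.mul_mem hh3 (K.mul_mem hh2 (K.mul_mem hh1 hg)), by
    rw [ac_mul, ac_mul, ac_mul, e1, e2, e3]⟩

theorem ac_T_zpow (v x : V ι) (n : ℤ) : ac (T v ^ n) x = x + (n * om x v) • v := by
  induction n using Int.induction_on with
  | zero => simp [ac_one]
  | succ n ih =>
    rw [_root_.zpow_add_one, ← (Commute.self_zpow (T v) n).eq, ac_mul, ih, ac_T, om_add_left, om_smul_left, om_self]
    module
  | pred n ih =>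
    rw [_root_.zpow_sub_one, ← ((Commute.self_zpow (T v) (-n)).inv_left).eq, ac_mul, ih, ac_T_inv, om_add_left, om_smul_left, om_self]
    module

theorem reach_f {s : Finset ι} {a : ι} (ha : a ∉ s) (hT : T (e a) ∈ K)
    (hX : ∀ d, idx d ∈ s → X (e a) (b d) ∈ K)
    (hfix : ∀ g ∈ K, ∀ c, idx c ∉ insert a s → ac g (b c) = b c)
    (hfixe : ∀ g ∈ K, ac g (e a) = e a)
    (w : V ι) (hw : ∀ c, idx c ∉ insert a s → w c = 0) (hvw : om (e a) w = 1) :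
    ∃ g ∈ K, ac g w = f a := by
  obtain ⟨g, hg, hmin⟩ := exists_min K w (fun v => ∑ c ∈ Finset.univ.erase (Sum.inl a), (v c).natAbs)
  have hsupp : ∀ c, idx c ∉ insert a s → ac g w c = 0 := by
    intro c hc
    have h1 : om (ac g w) (b c.swap) = om w (b c.swap) := by
      conv_lhs => rw [← hfix g hg c.swap (by rwa [idx_swap])]
      exact om_ac g _ _
    rw [om_b, om_b, Sum.swap_swap, hw c hc] at h1
    rcases sg_cases c.swap with h | h <;> rw [h] at h1 <;> omega
  have hea : om (ac g w) (e a) = -1 := by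
    conv_lhs => rw [← hfixe g hg]
    rw [om_ac, om_swap, hvw]
  have hra : ac g w (Sum.inr a) = 1 := by
    rw [om_e] at hea; omega
  have hzero : ∀ d, idx d ∈ s → ac g w d = 0 := by
    intro d hd
    by_contra hne
    have hda : d ≠ Sum.inl a := by rintro rfl; exact ha hd
    have hda' : d ≠ (Sum.inl a : ι ⊕ ι).swap := by rintro rfl; exact ha hd
    have h0 : om (e a) (b d) = 0 := om_bb hda'
    have e1 := hmin _ (hX d hd)
    have e2 := hmin _ (K.inv_mem (hX d hd))
    rw [ac_X h0, hea] at e1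
    rw [ac_X_inv h0, hea] at e2
    by_cases hs : (ac g w d - 1).natAbs < (ac g w d).natAbs
    · refine absurd e1 (not_le.2 (sum_lt (c := d) (by simp [hda]) ?_ ?_))
      · simpa [b_apply, e, hda, sub_eq_add_neg] using hs
      · intro c hc hcd
        have : c ≠ Sum.inl a := by simpa using hc
        simp [b_apply, e, this, hcd]
    · refine absurd e2 (not_le.2 (sum_lt (c := d) (by simp [hda]) ?_ ?_))
      · have : (ac g w d + 1).natAbs < (ac g w d).natAbs := by omega
        simpa [b_apply, e, hda, sub_eq_add_neg] using this
      · intro c hc hcd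
        have : c ≠ Sum.inl a := by simpa using hc
        simp [b_apply, e, this, hcd]
  refine ⟨T (e a) ^ (ac g w (Sum.inl a)) * g, K.mul_mem (K.zpow_mem hT _) hg, ?_⟩
  rw [ac_mul, ac_T_zpow, hea]
  ext c
  by_cases h1 : c = Sum.inl a
  · subst h1; simp [e, f, b_apply]
  by_cases h2 : c = Sum.inr a
  · subst h2; simp [e, f, b_apply, hra]
  have h3 : ac g w c = 0 := by
    by_cases h : idx c ∈ s
    · exact hzero c h
    · apply hsupp c
      rw [Finset.mem_insert]; rintro (h' | h')
      · rcases c with c | c <;> simp_all [idx]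
      · exact h h'
  simp [e, f, b_apply, h1, h2, h3]

/-- pointwise stabilizer of a set of basis vectors inside `G` -/
def stab (G : Subgroup (Sp ι)) (P : ι ⊕ ι → Prop) : Subgroup (Sp ι) where
  carrier := {g | g ∈ G ∧ ∀ c, P c → ac g (b c) = b c}
  mul_mem' := by
    rintro g h ⟨hg, hg'⟩ ⟨hh, hh'⟩
    exact ⟨G.mul_mem hg hh, fun c hc => by rw [ac_mul, hh' c hc, hg' c hc]⟩
  one_mem' := ⟨G.one_mem, fun c _ => ac_one _⟩
  inv_mem' := by
    rintro g ⟨hg, hg'⟩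
    exact ⟨G.inv_mem hg, fun c hc => ac_inv_eq (hg' c hc)⟩

theorem gen_aux {G : Subgroup (Sp ι)} (hT : ∀ c, T (b c) ∈ G)
    (hX : ∀ c d, d ≠ c → d ≠ c.swap → X (b c) (b d) ∈ G) (s : Finset ι) :
    ∀ M : Sp ι, (∀ c, idx c ∉ s → ac M (b c) = b c) → M ∈ G := by
  induction s using Finset.induction_on with
  | empty =>
    intro M hM
    have : M = 1 := ac_ext_b fun c => by rw [hM c (by simp), ac_one]
    rw [this]; exact G.one_mem
  | insert a s ha ih =>
    intro M hM
    have supp : ∀ x : V ι, (∀ c, idx c ∉ insert a s → x c = 0) →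
        ∀ g : Sp ι, (∀ c, idx c ∉ insert a s → ac g (b c) = b c) →
        ∀ c, idx c ∉ insert a s → ac g x c = 0 := by
      intro x hx g hg c hc
      have h1 : om (ac g x) (b c.swap) = om x (b c.swap) := by
        conv_lhs => rw [← hg c.swap (by rwa [idx_swap])]
        exact om_ac g _ _
      rw [om_b, om_b, Sum.swap_swap, hx c hc] at h1
      rcases sg_cases c.swap with h | h <;> rw [h] at h1 <;> omega
    have hsb : ∀ d, idx d = a → ∀ c, idx c ∉ insert a s → b d c = 0 := by
      intro d hd c hc
      rw [b_apply, if_neg]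
      rintro rfl
      exact hc (by simp [hd])
    have tfix : ∀ c d, idx c ∈ insert a s → idx d ∉ insert a s → ac (T (b c)) (b d) = b d := by
      intro c d hc hd
      rw [ac_T, om_bb, zero_smul, add_zero]
      rintro rfl
      exact hd (by rwa [idx_swap] at hc)
    have xfix : ∀ c d c', idx c ∈ insert a s → idx d ∈ insert a s → d ≠ c.swap →
        idx c' ∉ insert a s → ac (X (b c) (b d)) (b c') = b c' := by
      intro c d c' hc hd hcd hc'
      rw [ac_X (om_bb hcd), om_bb, om_bb]
      · simp
      · rintro rfl
        exact hc' (by rwa [idx_swap] at hd)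
      · rintro rfl
        exact hc' (by rwa [idx_swap] at hc)
    obtain ⟨g, ⟨hgG, hgf⟩, hg⟩ := reach_e (K := stab G (fun c => idx c ∉ insert a s))
      (S := insert a s)
      (fun c hc => ⟨hT c, fun d hd => tfix c d hc hd⟩)
      (fun c d hc hd h1 h2 => ⟨hX c d h1 h2, fun c' hc' => xfix c d c' hc hd h2 hc'⟩)
      (fun g hg c hc => hg.2 c hc) (ac M (e a)) (ac M (f a))
      (supp _ (hsb _ rfl) M hM) (by rw [om_ac, om_ef, if_pos rfl]) a (by simp)
    have hgM : ∀ c, idx c ∉ insert a s → ac (g * M) (b c) = b c := fun c hc => by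
      rw [ac_mul, hM c hc, hgf c hc]
    obtain ⟨h, ⟨hhG, hhf⟩, hh⟩ := reach_f (K := stab G (fun c => idx c ∉ insert a s ∨ c = Sum.inl a))
      (s := s) (a := a) ha
      ⟨hT _, by
        rintro c (hc | rfl)
        · exact tfix _ c (by simp [idx]) hc
        · rw [ac_T]; simp [e, om_self]⟩
      (fun d hd => ⟨hX _ d (by rintro rfl; exact ha hd) (by rintro rfl; exact ha hd), by
        have h2 : d ≠ (Sum.inl a : ι ⊕ ι).swap := by rintro rfl; exact ha hd
        rintro c (hc | rfl)
        · exact xfix _ d c (by simp [idx]) (by simp [hd]) h2 hc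
        · rw [e, ac_X (om_bb h2), om_self, om_bb h2]; simp⟩)
      (fun g hg c hc => hg.2 c (Or.inl hc)) (fun g hg => hg.2 _ (Or.inr rfl))
      (ac (g * M) (f a)) (supp _ (hsb _ rfl) _ hgM) (by
        rw [← hg, ← ac_mul, om_ac, om_ef, if_pos rfl])
    have hfin : h * (g * M) ∈ G := by
      apply ih
      intro c hc
      by_cases hca : idx c = a
      · rcases eq_or_swap (d := Sum.inl a) hca with rfl | rfl
        · rw [ac_mul, ac_mul]
          have : ac g (ac M (b (Sum.inl a))) = b (Sum.inl a) := hg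
          rw [this, hhf _ (Or.inr rfl)]
        · rw [ac_mul]; exact hh
      · have : idx c ∉ insert a s := by simp [hca, hc]
        rw [ac_mul, hgM c this, hhf c (Or.inl this)]
    have h3 := G.mul_mem (G.inv_mem hgG) (G.mul_mem (G.inv_mem hhG) hfin)
    have h4 : g⁻¹ * (h⁻¹ * (h * (g * M))) = M := by group
    rwa [h4] at h3

/-- main generation criterion -/
theorem gen {G : Subgroup (Sp ι)} (hTe : ∀ i, T (e i) ∈ G) (hTf : ∀ i, T (f i) ∈ G)
    (hX : ∀ i j, i ≠ j → X (e i) (f j) ∈ G) : G = ⊤ := by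
  have conj : ∀ g ∈ G, ∀ p q, X p q ∈ G → X (ac g p) (ac g q) ∈ G := by
    intro g hg p q h
    rw [← conj_X]
    exact G.mul_mem (G.mul_mem hg h) (G.inv_mem hg)
  have hrot : ∀ i, ∃ g ∈ G, ac g (f i) = - e i ∧ ac g (e i) = e i + f i ∧
      ∀ j, j ≠ i → ac g (e j) = e j ∧ ac g (f j) = f j := by
    intro i
    refine ⟨T (f i) * T (e i), G.mul_mem (hTf i) (hTe i), ?_, ?_, ?_⟩
    · simp only [ac_mul, ac_T, om_fe, om_ef, om_add_left, om_smul_left, om_ff, if_true]; module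
    · simp only [ac_mul, ac_T, om_fe, om_ef, om_ee, om_add_left, om_smul_left, om_ff, if_true]; module
    · intro j hj
      constructor
      · simp [ac_mul, ac_T, om_fe, om_ef, om_ee, om_add_left, om_smul_left, om_ff, hj]
      · simp [ac_mul, ac_T, om_fe, om_ef, om_ee, om_add_left, om_smul_left, om_ff, hj]
  have hee : ∀ i j, i ≠ j → X (e i) (e j) ∈ G := by
    intro i j hij
    obtain ⟨g, hg, h1, -, h2⟩ := hrot j
    have := conj g hg _ _ (hX i j hij)
    rw [h1, (h2 i hij).1, X_neg_right (om_ee _ _)] at this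
    exact inv_mem_iff.1 this
  have hff : ∀ i j, i ≠ j → X (f i) (f j) ∈ G := by
    intro i j hij
    obtain ⟨g, hg, h1, -, h2⟩ := hrot i
    have := conj g⁻¹ (G.inv_mem hg) _ _ (hX i j hij)
    have h3 : ac g⁻¹ (e i) = - f i := by
      apply ac_inv_eq
      rw [ac_neg, h1, neg_neg]
    rw [h3, ac_inv_eq (h2 j hij.symm).2, X_neg_left (om_ff _ _)] at this
    exact inv_mem_iff.1 this
  rw [eq_top_iff]
  intro M _
  refine gen_aux (G := G) ?_ ?_ Finset.univ M (by simp)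
  · rintro (i | i)
    · exact hTe i
    · exact hTf i
  · rintro (i | i) (j | j) h1 h2
    · exact hee i j (by simpa [eq_comm] using h1)
    · exact hX i j (by simpa [eq_comm] using h2)
    · have hne : j ≠ i := by simpa [eq_comm] using h2
      have := hX j i hne
      rw [X_comm (by rw [om_ef, if_neg hne])] at this
      exact this
    · exact hff i j (by simpa [eq_comm] using h1)

end Gen
end SpGen
namespace SpGen
open Matrix
section Rel
variable {ι : Type} [Fintype ι] [DecidableEq ι]

theorem gen' {G : Subgroup (Sp ι)} (d : ι) (hTe : T (e d) ∈ G) (hTf : T (f d) ∈ G)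
    (hX : ∀ i j, i ≠ j → X (e i) (f j) ∈ G) : G = ⊤ := by
  have conj : ∀ g ∈ G, ∀ p, T p ∈ G → T (ac g p) ∈ G := by
    intro g hg p h
    rw [← conj_T]
    exact G.mul_mem (G.mul_mem hg h) (G.inv_mem hg)
  refine gen ?_ ?_ hX
  · intro i
    by_cases hid : i = d
    · subst hid; exact hTe
    have hdi : ¬ d = i := fun h => hid h.symm
    have := conj _ (G.mul_mem (G.inv_mem (hX d i hdi)) (hX i d hid)) _ hTe
    rw [ac_mul, ac_X (by simp [om_ef, hid]), ac_X_inv (by simp [om_ef, hdi])] at this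
    simpa [om_add_left, om_ee, om_ef, hid, hdi] using this
  · intro i
    by_cases hid : i = d
    · subst hid; exact hTf
    have hdi : ¬ d = i := fun h => hid h.symm
    have := conj _ (G.mul_mem (G.inv_mem (hX i d hid)) (hX d i hdi)) _ hTf
    rw [ac_mul, ac_X (by simp [om_ef, hdi]), ac_X_inv (by simp [om_ef, hid])] at this
    rw [← T_neg]
    simpa [om_add_left, om_neg_left, om_ff, om_fe, hid, hdi] using this

/-- The relation `E_{pq} ∈ G`. -/
def R (G : Subgroup (Sp ι)) (p q : ι) : Prop := p = q ∨ X (e p) (f q) ∈ G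

theorem conj_mem {G : Subgroup (Sp ι)} {g : Sp ι} (hg : g ∈ G) {p q : V ι} (h : X p q ∈ G) :
    X (ac g p) (ac g q) ∈ G := by
  rw [← conj_X]
  exact G.mul_mem (G.mul_mem hg h) (G.inv_mem hg)

theorem Xef_commutator {p q s : ι} (hpq : p ≠ q) (hqs : q ≠ s) (hps : p ≠ s) :
    X (e q) (f s) * X (e p) (f q) * (X (e q) (f s))⁻¹ * (X (e p) (f q))⁻¹ =
      (X (e p) (f s))⁻¹ := by
  have h := X_commutator (p := f s) (q := e q) (p' := f q) (q' := e p)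
    (by simp [om_fe, hqs.symm]) (by simp [om_fe, hpq.symm]) (by simp [om_ef]) (om_ff _ _)
    (by simp [om_fe, hps.symm]) (om_ee _ _)
  rwa [X_comm (p := f s) (by simp [om_fe, hqs.symm]), X_comm (p := f q) (by simp [om_fe, hpq.symm]),
    X_comm (p := f s) (by simp [om_fe, hps.symm])] at h

theorem Xef_commute {p q p' q' : ι} (h1 : p ≠ q) (h2 : p' ≠ q') (h3 : p ≠ q') (h4 : p' ≠ q) :
    Commute (X (e p) (f q)) (X (e p') (f q')) :=
  X_commute (by simp [om_ef, h1]) (by simp [om_ef, h2]) (by simp [om_fe, h4.symm]) (om_ee _ _)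
    (by simp [om_ef, h3]) (om_ff _ _)

theorem R.trans {G : Subgroup (Sp ι)} {p q s : ι} (h1 : R G p q) (h2 : R G q s) : R G p s := by
  by_cases hps : p = s
  · exact Or.inl hps
  by_cases hpq : p = q
  · subst hpq; exact h2
  by_cases hqs : q = s
  · subst hqs; exact h1
  have h1 := h1.resolve_left hpq
  have h2 := h2.resolve_left hqs
  right
  rw [← inv_mem_iff, ← Xef_commutator hpq hqs hps]
  exact G.mul_mem (G.mul_mem (G.mul_mem h2 h1) (G.inv_mem h2)) (G.inv_mem h1)

theorem R.perm {G : Subgroup (Sp ι)} {p q : ι} (h : R G p q) {π : Equiv.Perm ι}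
    (hπ : perm π ∈ G) : R G (π p) (π q) := by
  rcases h with rfl | h
  · exact Or.inl rfl
  · right
    have := conj_mem hπ h
    rwa [ac_perm_e, ac_perm_f] at this

theorem expand (x : V ι) : x = ∑ c, x c • b c := by
  ext d
  simp [b_apply]

theorem ac_sum {α : Type} (g : Sp ι) (s : Finset α) (F : α → V ι) :
    ac g (∑ i ∈ s, F i) = ∑ i ∈ s, ac g (F i) := by
  classical
  induction s using Finset.induction_on with
  | empty => simp [ac]
  | insert a s ha ih => rw [Finset.sum_insert ha, Finset.sum_insert ha, ac_add, ih]

/-- elements with disjoint supports commute -/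
theorem commute_of_disjoint {g h : Sp ι} (P : ι → Prop)
    (hg : ∀ c, P (idx c) → ac g (b c) = b c) (hh : ∀ c, ¬ P (idx c) → ac h (b c) = b c) :
    Commute g h := by
  have key : ∀ (P : ι → Prop) (g h : Sp ι), (∀ c, P (idx c) → ac g (b c) = b c) →
      (∀ c, ¬ P (idx c) → ac h (b c) = b c) → ∀ c, ¬ P (idx c) →
      ac g (ac h (b c)) = ac h (ac g (b c)) := by
    intro P g h hg hh c hc
    rw [hh c hc]
    have hz : ∀ d, P (idx d) → ac g (b c) d = 0 := by
      intro d hd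
      have h1 : om (ac g (b c)) (b d.swap) = om (b c) (b d.swap) := by
        conv_lhs => rw [← hg d.swap (by rwa [idx_swap])]
        exact om_ac g _ _
      rw [om_bb (c := c) (d := d.swap), om_b, Sum.swap_swap] at h1
      · rcases sg_cases d.swap with h | h <;> rw [h] at h1 <;> omega
      · intro h'
        apply hc
        rw [← idx_swap c, ← h', idx_swap]; exact hd
    conv_rhs => rw [expand (ac g (b c)), ac_sum]
    conv_lhs => rw [expand (ac g (b c))]
    apply Finset.sum_congr rfl
    intro d _
    rw [ac_smul]
    by_cases hd : P (idx d)
    · rw [hz d hd]; simp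
    · rw [hh d hd]
  apply ac_ext_b
  intro c
  rw [ac_mul, ac_mul]
  by_cases hc : P (idx c)
  · exact (key (fun i => ¬ P i) h g hh (fun c hc => hg c (not_not.1 hc)) c (not_not.2 hc)).symm
  · exact key P g h hg hh c hc

end Rel

section Transfer

theorem J_submatrix {α β : Type} [DecidableEq α] [DecidableEq β] (σ : α ≃ β) :
    (J α ℤ).submatrix (Equiv.sumCongr σ σ).symm (Equiv.sumCongr σ σ).symm = J β ℤ := by
  ext (i | i) (j | j) <;> simp [J, Matrix.one_apply]

theorem mem_submatrix {α β : Type} [Fintype α] [DecidableEq α] [Fintype β] [DecidableEq β]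
    (σ : α ≃ β) {A : Matrix (α ⊕ α) (α ⊕ α) ℤ} (hA : A ∈ Matrix.symplecticGroup α ℤ) :
    A.submatrix (Equiv.sumCongr σ σ).symm (Equiv.sumCongr σ σ).symm ∈
      Matrix.symplecticGroup β ℤ := by
  rw [SymplecticGroup.mem_iff] at hA ⊢
  rw [← J_submatrix σ, Matrix.transpose_submatrix, Matrix.submatrix_mul_equiv,
    Matrix.submatrix_mul_equiv, hA]

def spEquiv {α β : Type} [Fintype α] [DecidableEq α] [Fintype β] [DecidableEq β]
    (σ : α ≃ β) : Sp α ≃* Sp β where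
  toFun A := ⟨_, mem_submatrix σ A.2⟩
  invFun A := ⟨_, mem_submatrix σ.symm A.2⟩
  left_inv A := by
    apply Subtype.ext
    ext (i | i) (j | j) <;> simp
  right_inv A := by
    apply Subtype.ext
    ext (i | i) (j | j) <;> simp
  map_mul' A B := by
    apply Subtype.ext
    simp [Matrix.submatrix_mul_equiv]

theorem orderOf_conj' {H : Type} [Group H] (g x : H) : orderOf (g * x * g⁻¹) = orderOf x :=
  orderOf_injective (MulAut.conj g).toMonoidHom (MulAut.conj g).injective x

end Transfer
end SpGen
namespace SpGen
open Matrix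
section Construction

theorem zmod_ne_zero {k a : ℕ} (h0 : 0 < a) (h1 : a < k) : (a : ZMod k) ≠ 0 := by
  rw [Ne, ZMod.natCast_eq_zero_iff]
  intro h
  exact absurd (Nat.le_of_dvd h0 h) (by omega)

theorem zmod_cast_inj {k a c : ℕ} (h0 : a < k) (h1 : c < k) (h : (a : ZMod k) = c) : a = c := by
  have := congrArg ZMod.val h
  rwa [ZMod.val_natCast_of_lt h0, ZMod.val_natCast_of_lt h1] at this

abbrev I (k m r : ℕ) : Type := (ZMod k × ZMod m) ⊕ Fin r

variable {k m r : ℕ} [NeZero k] [NeZero m]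

abbrev pt (i : ZMod k) (j : ZMod m) : I k m r := Sum.inl (i, j)

/-- the level shift -/
def xp : Equiv.Perm (I k m r) :=
  Equiv.sumCongr (Equiv.prodCongr (Equiv.addRight 1) (Equiv.refl _)) (Equiv.refl _)

theorem xp_pt (i : ZMod k) (j : ZMod m) : (xp : Equiv.Perm (I k m r)) (pt i j) = pt (i + 1) j := rfl
theorem xp_inr (t : Fin r) : (xp : Equiv.Perm (I k m r)) (Sum.inr t) = Sum.inr t := rfl
theorem xp_inv_pt (i : ZMod k) (j : ZMod m) :
    (xp : Equiv.Perm (I k m r))⁻¹ (pt i j) = pt (i - 1) j := by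
  rw [Equiv.Perm.inv_eq_iff_eq, xp_pt, sub_add_cancel]
theorem xp_inv_inr (t : Fin r) : (xp : Equiv.Perm (I k m r))⁻¹ (Sum.inr t) = Sum.inr t := by
  rw [Equiv.Perm.inv_eq_iff_eq, xp_inr]

theorem xp_pow_pt (n : ℕ) (i : ZMod k) (j : ZMod m) :
    ((xp : Equiv.Perm (I k m r)) ^ n) (pt i j) = pt (i + (n : ZMod k)) j := by
  induction n with
  | zero => simp
  | succ n ih =>
    rw [pow_succ', Equiv.Perm.mul_apply, ih, xp_pt]
    push_cast
    rw [add_assoc]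

theorem xp_pow_inr (n : ℕ) (t : Fin r) :
    ((xp : Equiv.Perm (I k m r)) ^ n) (Sum.inr t) = Sum.inr t := by
  induction n with
  | zero => simp
  | succ n ih => rw [pow_succ', Equiv.Perm.mul_apply, ih, xp_inr]

theorem orderOf_xp : orderOf (xp : Equiv.Perm (I k m r)) = k := by
  apply Nat.dvd_antisymm
  · apply orderOf_dvd_of_pow_eq_one
    ext1 p
    rcases p with ⟨i, j⟩ | t
    · rw [xp_pow_pt]; simp
    · rw [xp_pow_inr]; simp
  · have h := congrArg (fun π : Equiv.Perm (I k m r) => π (pt 0 0))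
      (pow_orderOf_eq_one (xp : Equiv.Perm (I k m r)))
    simp only [xp_pow_pt] at h
    simp at h
    rwa [ZMod.natCast_eq_zero_iff] at h

/-- the column shift on level zero -/
def up : Equiv.Perm (I k m r) where
  toFun := Sum.map (fun p => (p.1, if p.1 = 0 then p.2 + 1 else p.2)) id
  invFun := Sum.map (fun p => (p.1, if p.1 = 0 then p.2 - 1 else p.2)) id
  left_inv := by
    rintro (⟨i, j⟩ | t)
    · by_cases h : i = 0 <;> simp [h]
    · rfl
  right_inv := by
    rintro (⟨i, j⟩ | t)
    · by_cases h : i = 0 <;> simp [h]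
    · rfl

theorem up_zero (j : ZMod m) : (up : Equiv.Perm (I k m r)) (pt 0 j) = pt 0 (j + 1) := by
  simp [up]
theorem up_ne {i : ZMod k} (hi : i ≠ 0) (j : ZMod m) :
    (up : Equiv.Perm (I k m r)) (pt i j) = pt i j := by
  simp [up, hi]
theorem up_inr (t : Fin r) : (up : Equiv.Perm (I k m r)) (Sum.inr t) = Sum.inr t := rfl

/-- swap with the leftover points -/
def tf (p : I k m r) : I k m r :=
  match p with
  | Sum.inl (i, j) =>
    if h : i = 2 ∧ j.val < r then Sum.inr ⟨j.val, h.2⟩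
    else if i = 2 ∧ j.val = r then pt 3 j
    else if i = 3 ∧ j.val = r then pt 2 j
    else pt i j
  | Sum.inr t => pt 2 ((t : ℕ) : ZMod m)

theorem tf_inr (t : Fin r) : tf (Sum.inr t : I k m r) = pt 2 ((t : ℕ) : ZMod m) := rfl

theorem tf_ne {i : ZMod k} (h2 : i ≠ 2) (h3 : i ≠ 3) (j : ZMod m) :
    tf (pt i j : I k m r) = pt i j := by
  simp [tf, h2, h3]

theorem tf_col {i : ZMod k} {j : ZMod m} (h : r < j.val) :
    tf (pt i j : I k m r) = pt i j := by
  have h1 : ¬ j.val < r := by omega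
  have h2 : ¬ j.val = r := by omega
  simp [tf, h1, h2]

theorem tf_two_lt (hr : r + 3 ≤ m) (t : Fin r) :
    tf (pt 2 ((t : ℕ) : ZMod m) : I k m r) = Sum.inr t := by
  have : ((t : ℕ) : ZMod m).val = t := ZMod.val_natCast_of_lt (by omega)
  simp [tf, this]

theorem tf_two_r (hr : r + 3 ≤ m) :
    tf (pt 2 (r : ZMod m) : I k m r) = pt 3 (r : ZMod m) := by
  have : ((r : ℕ) : ZMod m).val = r := ZMod.val_natCast_of_lt (by omega)
  simp [tf, this]

theorem tf_invol (hk : 6 ≤ k) (hr : r + 3 ≤ m) : Function.Involutive (tf : I k m r → I k m r) := by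
  have h1 : (1 : ZMod k) ≠ 0 := by simpa using zmod_ne_zero (k := k) (a := 1) (by omega) (by omega)
  have h32 : (3 : ZMod k) ≠ 2 := by
    intro h; apply h1; linear_combination h
  rintro (⟨i, j⟩ | t)
  · by_cases c1 : i = 2 ∧ j.val < r
    · obtain ⟨rfl, hj⟩ := c1
      simp [tf, hj]
    · by_cases c2 : i = 2 ∧ j.val = r
      · obtain ⟨rfl, hj⟩ := c2
        simp [tf, hj, h32]
      · by_cases c3 : i = 3 ∧ j.val = r
        · obtain ⟨rfl, hj⟩ := c3
          simp [tf, hj, h32]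
        · have : tf (pt i j : I k m r) = pt i j := by
            simp only [tf, dif_neg c1, if_neg c2, if_neg c3]
          change tf (tf (pt i j)) = _
          rw [this, this]
  · rw [tf_inr, tf_two_lt hr]

def tp (hk : 6 ≤ k) (hr : r + 3 ≤ m) : Equiv.Perm (I k m r) := (tf_invol hk hr).toPerm

theorem tp_apply (hk : 6 ≤ k) (hr : r + 3 ≤ m) (p : I k m r) : tp hk hr p = tf p := rfl

abbrev cp (k m r : ℕ) : I k m r := pt 2 ((r + 1 : ℕ) : ZMod m)

/-- root element on level zero -/
noncomputable def A (i : ZMod k) (j : ZMod m) : Sp (I k m r) := X (e (pt i j)) (f (pt i (j + 1)))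

noncomputable def gB (hk : 6 ≤ k) (hr : r + 3 ≤ m) : Sp (I k m r) :=
  T (f (cp k m r)) * T (e (cp k m r)) * perm (tp hk hr)

noncomputable def gv (hk : 6 ≤ k) (hr : r + 3 ≤ m) : Sp (I k m r) := A 0 0 * gB hk hr

noncomputable def gx : Sp (I k m r) := perm xp
noncomputable def gy : Sp (I k m r) := perm up * gx * (perm up)⁻¹
noncomputable def gz (hk : 6 ≤ k) (hr : r + 3 ≤ m) : Sp (I k m r) := gv hk hr * gx * (gv hk hr)⁻¹

noncomputable def gG (hk : 6 ≤ k) (hr : r + 3 ≤ m) : Subgroup (Sp (I k m r)) :=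
  Subgroup.closure {gx, gy, gz hk hr}

theorem gx_mem (hk : 6 ≤ k) (hr : r + 3 ≤ m) : (gx : Sp (I k m r)) ∈ gG hk hr :=
  Subgroup.subset_closure (by simp)
theorem gy_mem (hk : 6 ≤ k) (hr : r + 3 ≤ m) : (gy : Sp (I k m r)) ∈ gG hk hr :=
  Subgroup.subset_closure (by simp)
theorem gz_mem (hk : 6 ≤ k) (hr : r + 3 ≤ m) : (gz hk hr : Sp (I k m r)) ∈ gG hk hr :=
  Subgroup.subset_closure (by simp)

/-- the permutation `y⁻¹ x` -/
def hp : Equiv.Perm (I k m r) := up * xp⁻¹ * up⁻¹ * xp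

theorem perm_hp_mem (hk : 6 ≤ k) (hr : r + 3 ≤ m) : perm (hp : Equiv.Perm (I k m r)) ∈ gG hk hr := by
  have : perm (hp : Equiv.Perm (I k m r)) = gy⁻¹ * gx := by
    simp only [hp, perm_mul, perm_inv, gy, gx]; group
  rw [this]
  exact mul_mem (inv_mem (gy_mem hk hr)) (gx_mem hk hr)

theorem hp_zero (hk : 6 ≤ k) (j : ZMod m) : (hp : Equiv.Perm (I k m r)) (pt 0 j) = pt 0 (j + 1) := by
  have h1 : (1 : ZMod k) ≠ 0 := by simpa using zmod_ne_zero (k := k) (a := 1) (by omega) (by omega)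
  have : (up : Equiv.Perm (I k m r))⁻¹ (pt 1 j) = pt 1 j := by
    rw [Equiv.Perm.inv_eq_iff_eq, up_ne h1]
  simp only [hp, Equiv.Perm.mul_apply]
  rw [xp_pt, zero_add, this, xp_inv_pt, sub_self, up_zero]

theorem hp_ne {i : ZMod k} (h0 : i ≠ 0) (h1 : i ≠ -1) (j : ZMod m) :
    (hp : Equiv.Perm (I k m r)) (pt i j) = pt i j := by
  have h2 : i + 1 ≠ 0 := fun h => h1 (by linear_combination h)
  have : (up : Equiv.Perm (I k m r))⁻¹ (pt (i + 1) j) = pt (i + 1) j := by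
    rw [Equiv.Perm.inv_eq_iff_eq, up_ne h2]
  simp only [hp, Equiv.Perm.mul_apply]
  rw [xp_pt, this, xp_inv_pt, add_sub_cancel_right, up_ne h0]

theorem hp_inr (t : Fin r) : (hp : Equiv.Perm (I k m r)) (Sum.inr t) = Sum.inr t := by
  have : (up : Equiv.Perm (I k m r))⁻¹ (Sum.inr t) = Sum.inr t := by
    rw [Equiv.Perm.inv_eq_iff_eq, up_inr]
  simp only [hp, Equiv.Perm.mul_apply]
  rw [xp_inr, this, xp_inv_inr, up_inr]

theorem hp_pow_zero (hk : 6 ≤ k) (n : ℕ) (j : ZMod m) :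
    ((hp : Equiv.Perm (I k m r)) ^ n) (pt 0 j) = pt 0 (j + (n : ZMod m)) := by
  induction n with
  | zero => simp
  | succ n ih =>
    rw [pow_succ', Equiv.Perm.mul_apply, ih, hp_zero hk]
    push_cast
    rw [add_assoc]

/-- `g` fixes both basis vectors at `p` -/
def Fx {ι : Type} [Fintype ι] [DecidableEq ι] (g : Sp ι) (p : ι) : Prop :=
  ac g (e p) = e p ∧ ac g (f p) = f p

theorem Fx.mul {ι : Type} [Fintype ι] [DecidableEq ι] {g h : Sp ι} {p : ι} (hg : Fx g p)
    (hh : Fx h p) : Fx (g * h) p :=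
  ⟨by rw [ac_mul, hh.1, hg.1], by rw [ac_mul, hh.2, hg.2]⟩

theorem Fx.inv {ι : Type} [Fintype ι] [DecidableEq ι] {g : Sp ι} {p : ι} (hg : Fx g p) :
    Fx g⁻¹ p := ⟨ac_inv_eq hg.1, ac_inv_eq hg.2⟩

theorem Fx_perm {ι : Type} [Fintype ι] [DecidableEq ι] {π : Equiv.Perm ι} {p : ι} (h : π p = p) :
    Fx (perm π) p := ⟨by rw [ac_perm_e, h], by rw [ac_perm_f, h]⟩

theorem Fx_conj_perm {ι : Type} [Fintype ι] [DecidableEq ι] {π : Equiv.Perm ι} {g : Sp ι} {p : ι}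
    (h : Fx g (π⁻¹ p)) : Fx (perm π * g * (perm π)⁻¹) p := by
  constructor
  · rw [ac_mul, ac_mul, ← perm_inv, ac_perm_e, h.1, ac_perm_e, ← Equiv.Perm.mul_apply, mul_inv_cancel, Equiv.Perm.one_apply]
  · rw [ac_mul, ac_mul, ← perm_inv, ac_perm_f, h.2, ac_perm_f, ← Equiv.Perm.mul_apply, mul_inv_cancel, Equiv.Perm.one_apply]

theorem Fx_Te {ι : Type} [Fintype ι] [DecidableEq ι] {p q : ι} (h : p ≠ q) : Fx (T (e q)) p := by
  constructor <;> simp [ac_T, om_ee, om_fe, h]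

theorem Fx_Tf {ι : Type} [Fintype ι] [DecidableEq ι] {p q : ι} (h : p ≠ q) : Fx (T (f q)) p := by
  constructor <;> simp [ac_T, om_ff, om_ef, h]

theorem Fx_X {ι : Type} [Fintype ι] [DecidableEq ι] {p q s : ι} (h : q ≠ s) (h1 : p ≠ q)
    (h2 : p ≠ s) : Fx (X (e q) (f s)) p := by
  constructor <;> rw [ac_X (by simp [om_ef, h])] <;> simp [om_ff, om_ef, om_ee, om_fe, h1, h2]

theorem A_ne (hm : 8 ≤ m) (i : ZMod k) (j : ZMod m) : (pt i j : I k m r) ≠ pt i (j + 1) := by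
  have h1 : (1 : ZMod m) ≠ 0 := by simpa using zmod_ne_zero (k := m) (a := 1) (by omega) (by omega)
  simpa using h1

theorem Fx_A (hm : 8 ≤ m) {i i' : ZMod k} (hi : i' ≠ i) (j j' : ZMod m) :
    Fx (A i j : Sp (I k m r)) (pt i' j') :=
  Fx_X (A_ne hm i j) (by simp [hi]) (by simp [hi])

theorem Fx_A_inr (hm : 8 ≤ m) {i : ZMod k} (j : ZMod m) (t : Fin r) :
    Fx (A i j : Sp (I k m r)) (Sum.inr t) :=
  Fx_X (A_ne hm i j) (by simp) (by simp)

theorem Fx_gB (hk : 6 ≤ k) (hr : r + 3 ≤ m) {i : ZMod k} (h2 : i ≠ 2) (h3 : i ≠ 3) (j : ZMod m) :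
    Fx (gB hk hr : Sp (I k m r)) (pt i j) :=
  ((Fx_Tf (by simp [h2])).mul (Fx_Te (by simp [h2]))).mul (Fx_perm (tf_ne h2 h3 j))

theorem Fx_gv (hk : 6 ≤ k) (hm : 8 ≤ m) (hr : r + 3 ≤ m) {i : ZMod k} (h0 : i ≠ 0) (h2 : i ≠ 2)
    (h3 : i ≠ 3) (j : ZMod m) : Fx (gv hk hr : Sp (I k m r)) (pt i j) :=
  (Fx_A hm h0 _ _).mul (Fx_gB hk hr h2 h3 j)

end Construction
end SpGen
namespace SpGen
open Matrix
section Final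

theorem grp1 {H : Type} [Group H] {w a Y h : H} (hw : w = a * Y) (h1 : Commute Y a)
    (h2 : Commute Y h) : w⁻¹ * h * w * h⁻¹ = a⁻¹ * (h * a * h⁻¹) := by
  have h3 : Y * h⁻¹ = h⁻¹ * Y := h2.inv_right.eq
  have h4 : Y⁻¹ * a⁻¹ = a⁻¹ * Y⁻¹ := (h1.inv_left.inv_right).eq
  have h5 : Commute Y⁻¹ (h * a * h⁻¹) :=
    ((h2.mul_right h1).mul_right h2.inv_right).inv_left
  rw [hw, _root_.mul_inv_rev, h4]
  calc a⁻¹ * Y⁻¹ * h * (a * Y) * h⁻¹ = a⁻¹ * Y⁻¹ * h * a * (Y * h⁻¹) := by group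
    _ = a⁻¹ * (Y⁻¹ * (h * a * h⁻¹)) * Y := by rw [h3]; group
    _ = _ := by rw [h5.eq]; group

theorem grp2 {H : Type} [Group H] {b a c Z : H} (hZ : b * a * b⁻¹ * a⁻¹ = Z⁻¹) (h1 : Commute a Z)
    (h2 : Commute c a) (h3 : Commute c b) :
    (a⁻¹ * b) * (a⁻¹ * c) * (a⁻¹ * b)⁻¹ * (a⁻¹ * c)⁻¹ = Z := by
  have k1 : b * a⁻¹ * b⁻¹ = a⁻¹ * Z := by
    have : b * a * b⁻¹ = Z⁻¹ * a := by rw [← hZ]; group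
    calc b * a⁻¹ * b⁻¹ = (b * a * b⁻¹)⁻¹ := by group
      _ = _ := by rw [this]; group
  have k2 : c * (b⁻¹ * a) = b⁻¹ * a * c := (h3.inv_right.mul_right h2).eq
  calc (a⁻¹ * b) * (a⁻¹ * c) * (a⁻¹ * b)⁻¹ * (a⁻¹ * c)⁻¹
      = a⁻¹ * b * a⁻¹ * (c * (b⁻¹ * a)) * c⁻¹ * a := by group
    _ = a⁻¹ * (b * a⁻¹ * b⁻¹) * a * a := by rw [k2]; group
    _ = a⁻¹ * a⁻¹ * (Z * (a * a)) := by rw [k1]; group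
    _ = Z := by rw [(h1.symm.mul_right h1.symm).eq]; group

theorem grp3 {H : Type} [Group H] {b a c Z : H} (hZ : b * a * b⁻¹ * a⁻¹ = Z⁻¹) (h1 : Commute a Z)
    (h3 : Commute c b) :
    b * (a⁻¹ * c) * b⁻¹ * (a⁻¹ * c)⁻¹ = Z := by
  have k1 : b * a⁻¹ * b⁻¹ = a⁻¹ * Z := by
    have : b * a * b⁻¹ = Z⁻¹ * a := by rw [← hZ]; group
    calc b * a⁻¹ * b⁻¹ = (b * a * b⁻¹)⁻¹ := by group
      _ = _ := by rw [this]; group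
  calc b * (a⁻¹ * c) * b⁻¹ * (a⁻¹ * c)⁻¹ = b * a⁻¹ * (c * b⁻¹) * c⁻¹ * a := by group
    _ = b * a⁻¹ * b⁻¹ * a := by rw [h3.inv_right.eq]; group
    _ = Z := by rw [k1, mul_assoc, ← h1.eq]; group

theorem Fx.pow {ι : Type} [Fintype ι] [DecidableEq ι] {g : Sp ι} {p : ι} (hg : Fx g p) (n : ℕ) :
    Fx (g ^ n) p := by
  induction n with
  | zero => rw [pow_zero]; exact ⟨ac_one _, ac_one _⟩
  | succ n ih => rw [pow_succ]; exact ih.mul hg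

theorem commute_of_Fx {ι : Type} [Fintype ι] [DecidableEq ι] {g h : Sp ι} (P : ι → Prop)
    (hg : ∀ p, P p → Fx g p) (hh : ∀ p, ¬ P p → Fx h p) : Commute g h := by
  apply commute_of_disjoint P
  · rintro (c | c) hc
    · exact (hg c hc).1
    · exact (hg c hc).2
  · rintro (c | c) hc
    · exact (hh c hc).1
    · exact (hh c hc).2

variable {k m r : ℕ} [NeZero k] [NeZero m]

theorem kne (hk : 6 ≤ k) : (1 : ZMod k) ≠ 0 ∧ (2 : ZMod k) ≠ 0 ∧ (3 : ZMod k) ≠ 0 ∧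
    (4 : ZMod k) ≠ 0 ∧ (5 : ZMod k) ≠ 0 := by
  refine ⟨?_, ?_, ?_, ?_, ?_⟩
  · simpa using zmod_ne_zero (k := k) (a := 1) (by omega) (by omega)
  · simpa using zmod_ne_zero (k := k) (a := 2) (by omega) (by omega)
  · simpa using zmod_ne_zero (k := k) (a := 3) (by omega) (by omega)
  · simpa using zmod_ne_zero (k := k) (a := 4) (by omega) (by omega)
  · simpa using zmod_ne_zero (k := k) (a := 5) (by omega) (by omega)

noncomputable def gw (hk : 6 ≤ k) (hr : r + 3 ≤ m) : Sp (I k m r) := gz hk hr * gx⁻¹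

theorem gw_mem (hk : 6 ≤ k) (hr : r + 3 ≤ m) : (gw hk hr : Sp (I k m r)) ∈ gG hk hr :=
  mul_mem (gz_mem hk hr) (inv_mem (gx_mem hk hr))

theorem gw_eq (hk : 6 ≤ k) (hr : r + 3 ≤ m) :
    (gw hk hr : Sp (I k m r)) = gv hk hr * (gx * (gv hk hr) * gx⁻¹)⁻¹ := by
  simp only [gw, gz]; group

noncomputable def gY (hk : 6 ≤ k) (hr : r + 3 ≤ m) : Sp (I k m r) :=
  gB hk hr * (gx * gB hk hr * gx⁻¹)⁻¹ * (gx * A 0 0 * gx⁻¹)⁻¹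

theorem gw_eq' (hk : 6 ≤ k) (hr : r + 3 ≤ m) :
    (gw hk hr : Sp (I k m r)) = A 0 0 * gY hk hr := by
  simp only [gw_eq, gY, gv]; group

theorem Fx_conj_gx {g : Sp (I k m r)} {i : ZMod k} {j : ZMod m} (h : Fx g (pt (i - 1) j)) :
    Fx (gx * g * gx⁻¹) (pt i j) := by
  apply Fx_conj_perm
  rwa [xp_inv_pt]

def PP (p : I k m r) : Prop := ∃ j, p = pt 0 j ∨ p = pt (-1) j

theorem Fx_gY (hk : 6 ≤ k) (hm : 8 ≤ m) (hr : r + 3 ≤ m) (p : I k m r) (hp : PP p) :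
    Fx (gY hk hr) p := by
  obtain ⟨h1, h2, h3, h4, h5⟩ := kne hk
  obtain ⟨j, rfl | rfl⟩ := hp
  · refine ((Fx_gB hk hr h2.symm h3.symm j).mul (Fx_conj_gx (Fx_gB hk hr ?_ ?_ j)).inv).mul
      (Fx_conj_gx (Fx_A hm ?_ _ _)).inv
    · intro h; apply h3; linear_combination -h
    · intro h; apply h4; linear_combination -h
    · intro h; apply h1; linear_combination -h
  · refine ((Fx_gB hk hr ?_ ?_ j).mul (Fx_conj_gx (Fx_gB hk hr ?_ ?_ j)).inv).mul
      (Fx_conj_gx (Fx_A hm ?_ _ _)).inv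
    · intro h; apply h3; linear_combination -h
    · intro h; apply h4; linear_combination -h
    · intro h; apply h4; linear_combination -h
    · intro h; apply h5; linear_combination -h
    · intro h; apply h2; linear_combination -h

theorem Y_comm_A (hk : 6 ≤ k) (hm : 8 ≤ m) (hr : r + 3 ≤ m) :
    Commute (gY hk hr : Sp (I k m r)) (A 0 0) := by
  apply commute_of_Fx PP (Fx_gY hk hm hr)
  rintro (⟨i, j⟩ | t) h
  · exact Fx_A hm (fun h' => h ⟨j, Or.inl (by rw [h'])⟩) _ _
  · exact Fx_A_inr hm _ _

theorem Y_comm_h (hk : 6 ≤ k) (hm : 8 ≤ m) (hr : r + 3 ≤ m) (s : ℕ) :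
    Commute (gY hk hr : Sp (I k m r)) (perm hp ^ s) := by
  apply commute_of_Fx PP (Fx_gY hk hm hr)
  rintro (⟨i, j⟩ | t) h
  · exact (Fx_perm (hp_ne (fun h' => h ⟨j, Or.inl (by rw [h'])⟩)
      (fun h' => h ⟨j, Or.inr (by rw [h'])⟩) _)).pow s
  · exact (Fx_perm (hp_inr _)).pow s

theorem perm_pow {ι : Type} [Fintype ι] [DecidableEq ι] (π : Equiv.Perm ι) (n : ℕ) :
    perm (π ^ n) = perm π ^ n := map_pow permHom π n

/-- points of level zero -/
abbrev q (k m r : ℕ) (j : ℕ) : I k m r := pt 0 (j : ZMod m)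

theorem q_ne (hm : 8 ≤ m) {i j : ℕ} (h : i ≠ j) (hi : i < 8) (hj : j < 8) :
    q k m r i ≠ q k m r j := by
  intro h'
  apply h
  have := congrArg Prod.snd (Sum.inl.inj h')
  exact zmod_cast_inj (by omega) (by omega) this

theorem D_mem (hk : 6 ≤ k) (hm : 8 ≤ m) (hr : r + 3 ≤ m) (s : ℕ) :
    (X (e (q k m r 0)) (f (q k m r 1)))⁻¹ * X (e (q k m r s)) (f (q k m r (s + 1))) ∈
      gG hk hr := by
  have h := grp1 (gw_eq' (r := r) (m := m) hk hr) (Y_comm_A hk hm hr) (Y_comm_h hk hm hr s)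
  have hA : (A 0 0 : Sp (I k m r)) = X (e (q k m r 0)) (f (q k m r 1)) := by
    simp only [A, q, Nat.cast_zero, Nat.cast_one, zero_add]
  rw [hA, conj_X, ← perm_pow, ac_perm_e, ac_perm_f, hp_pow_zero hk, hp_pow_zero hk] at h
  have h0 : (pt 0 (((0 : ℕ) : ZMod m) + (s : ZMod m)) : I k m r) = q k m r s := by simp
  have h1 : (pt 0 (((1 : ℕ) : ZMod m) + (s : ZMod m)) : I k m r) = q k m r (s + 1) := by
    simp [add_comm]
  rw [h0, h1] at h
  rw [← h]
  have hh : perm ((hp : Equiv.Perm (I k m r)) ^ s) ∈ gG hk hr := by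
    rw [perm_pow]; exact pow_mem (perm_hp_mem hk hr) s
  exact mul_mem (mul_mem (mul_mem (inv_mem (gw_mem hk hr)) hh) (gw_mem hk hr)) (inv_mem hh)

theorem R_hp (hk : 6 ≤ k) (hr : r + 3 ≤ m) {a c j : ZMod m} (h : R (gG hk hr) (pt 0 a : I k m r) (pt 0 c)) :
    R (gG hk hr) (pt 0 (a + j) : I k m r) (pt 0 (c + j)) := by
  have hh : perm ((hp : Equiv.Perm (I k m r)) ^ j.val) ∈ gG hk hr := by
    rw [perm_pow]; exact pow_mem (perm_hp_mem hk hr) _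
  have := h.perm hh
  rwa [hp_pow_zero hk, hp_pow_zero hk, ZMod.natCast_zmod_val] at this

theorem R_xp (hk : 6 ≤ k) (hr : r + 3 ≤ m) {a c : ZMod m} {i l s : ZMod k}
    (h : R (gG hk hr) (pt i a : I k m r) (pt l c)) :
    R (gG hk hr) (pt (i + s) a : I k m r) (pt (l + s) c) := by
  have hh : perm ((xp : Equiv.Perm (I k m r)) ^ s.val) ∈ gG hk hr := by
    rw [perm_pow]; exact pow_mem (gx_mem hk hr) _
  have := h.perm hh
  rwa [xp_pow_pt, xp_pow_pt, ZMod.natCast_zmod_val] at this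

theorem E02 (hk : 6 ≤ k) (hm : 8 ≤ m) (hr : r + 3 ≤ m) :
    X (e (q k m r 0)) (f (q k m r 2)) ∈ gG hk hr := by
  have n : ∀ {i j : ℕ}, i ≠ j → i < 8 → j < 8 → q k m r i ≠ q k m r j := fun h => q_ne hm h
  have d1 := D_mem (r := r) hk hm hr 1
  have d4 := D_mem (r := r) hk hm hr 4
  have := grp2 (Xef_commutator (p := q k m r 0) (q := q k m r 1) (s := q k m r 2)
    (n (by omega) (by omega) (by omega)) (n (by omega) (by omega) (by omega))
    (n (by omega) (by omega) (by omega)))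
    (Xef_commute (n (by omega) (by omega) (by omega)) (n (by omega) (by omega) (by omega))
    (n (by omega) (by omega) (by omega)) (n (by omega) (by omega) (by omega)))
    (Xef_commute (p := q k m r 4) (q := q k m r 5)
    (n (by omega) (by omega) (by omega)) (n (by omega) (by omega) (by omega))
    (n (by omega) (by omega) (by omega)) (n (by omega) (by omega) (by omega)))
    (Xef_commute
    (n (by omega) (by omega) (by omega)) (n (by omega) (by omega) (by omega))
    (n (by omega) (by omega) (by omega)) (n (by omega) (by omega) (by omega)))
  rw [← this]
  exact mul_mem (mul_mem (mul_mem d1 d4) (inv_mem d1)) (inv_mem d4)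

theorem E03 (hk : 6 ≤ k) (hm : 8 ≤ m) (hr : r + 3 ≤ m) :
    X (e (q k m r 0)) (f (q k m r 3)) ∈ gG hk hr := by
  have n : ∀ {i j : ℕ}, i ≠ j → i < 8 → j < 8 → q k m r i ≠ q k m r j := fun h => q_ne hm h
  have d4 := D_mem (r := r) hk hm hr 4
  have d1 : X (e (q k m r 1)) (f (q k m r 3)) ∈ gG hk hr := by
    have := R_hp hk hr (j := 1) (Or.inr (E02 hk hm hr))
    have h1 : (pt 0 (((0 : ℕ) : ZMod m) + 1) : I k m r) = q k m r 1 := by simp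
    have h3 : (pt 0 (((2 : ℕ) : ZMod m) + 1) : I k m r) = q k m r 3 := by
      simp; norm_num
    rw [h1, h3] at this
    exact this.resolve_left (n (by omega) (by omega) (by omega))
  have := grp3 (Xef_commutator (p := q k m r 0) (q := q k m r 1) (s := q k m r 3)
    (n (by omega) (by omega) (by omega)) (n (by omega) (by omega) (by omega))
    (n (by omega) (by omega) (by omega)))
    (Xef_commute (n (by omega) (by omega) (by omega)) (n (by omega) (by omega) (by omega))
    (n (by omega) (by omega) (by omega)) (n (by omega) (by omega) (by omega)))
    (Xef_commute (p := q k m r 4) (q := q k m r 5)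
    (n (by omega) (by omega) (by omega)) (n (by omega) (by omega) (by omega))
    (n (by omega) (by omega) (by omega)) (n (by omega) (by omega) (by omega)))
  rw [← this]
  exact mul_mem (mul_mem (mul_mem d1 d4) (inv_mem d1)) (inv_mem d4)

theorem R_two (hk : 6 ≤ k) (hm : 8 ≤ m) (hr : r + 3 ≤ m) (j : ZMod m) :
    R (gG hk hr) (pt 0 j : I k m r) (pt 0 (j + 2)) := by
  have := R_hp hk hr (j := j) (Or.inr (E02 (r := r) hk hm hr))
  simpa [add_comm] using this

theorem R_three (hk : 6 ≤ k) (hm : 8 ≤ m) (hr : r + 3 ≤ m) (j : ZMod m) :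
    R (gG hk hr) (pt 0 j : I k m r) (pt 0 (j + 3)) := by
  have := R_hp hk hr (j := j) (Or.inr (E03 (r := r) hk hm hr))
  simpa [add_comm] using this

theorem R_add (hk : 6 ≤ k) (hm : 8 ≤ m) (hr : r + 3 ≤ m) (j : ZMod m) (d : ℕ) :
    R (gG hk hr) (pt 0 j : I k m r) (pt 0 (j + 2 + (d : ZMod m))) ∧
    R (gG hk hr) (pt 0 j : I k m r) (pt 0 (j + 3 + (d : ZMod m))) := by
  induction d with
  | zero => simpa using ⟨R_two (r := r) hk hm hr j, R_three (r := r) hk hm hr j⟩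
  | succ d ih =>
    refine ⟨?_, ?_⟩
    · have h : j + 2 + ((d + 1 : ℕ) : ZMod m) = j + 3 + (d : ZMod m) := by push_cast; ring
      rw [h]; exact ih.2
    · have h : j + 3 + ((d + 1 : ℕ) : ZMod m) = j + 2 + (d : ZMod m) + 2 := by push_cast; ring
      rw [h]; exact ih.1.trans (R_two hk hm hr _)

theorem R_level (hk : 6 ≤ k) (hm : 8 ≤ m) (hr : r + 3 ≤ m) (i : ZMod k) (j j' : ZMod m) :
    R (gG hk hr) (pt i j : I k m r) (pt i j') := by
  have h := (R_add (r := r) hk hm hr j (j' - j - 2).val).1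
  rw [ZMod.natCast_zmod_val] at h
  have h2 := R_xp hk hr (s := i) h
  have e1 : j + 2 + (j' - j - 2) = j' := by ring
  rwa [zero_add, e1] at h2

/-! the action of `gw` -/

theorem gw_two (hk : 6 ≤ k) (hm : 8 ≤ m) (hr : r + 3 ≤ m) (j : ZMod m) :
    ac (gw hk hr) (e (pt 2 j : I k m r)) = ac (gv hk hr) (e (pt 2 j)) ∧
    ac (gw hk hr) (f (pt 2 j : I k m r)) = ac (gv hk hr) (f (pt 2 j)) := by
  obtain ⟨h1, h2, h3, h4, h5⟩ := kne hk
  have : Fx (gx * gv hk hr * gx⁻¹)⁻¹ (pt 2 j : I k m r) := by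
    refine (Fx_conj_gx (Fx_gv hk hm hr ?_ ?_ ?_ j)).inv
    · intro h; apply h1; linear_combination h
    · intro h; apply h1; linear_combination -h
    · intro h; apply h2; linear_combination -h
  rw [gw_eq, ac_mul, ac_mul, this.1, this.2]
  exact ⟨rfl, rfl⟩

theorem gw_fix (hk : 6 ≤ k) (hm : 8 ≤ m) (hr : r + 3 ≤ m) (j : ZMod m) :
    Fx (gw hk hr) (pt (-1) j : I k m r) := by
  obtain ⟨h1, h2, h3, h4, h5⟩ := kne hk
  rw [gw_eq]
  refine (Fx_gv hk hm hr ?_ ?_ ?_ j).mul (Fx_conj_gx (Fx_gv hk hm hr ?_ ?_ ?_ j)).inv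
  · intro h; apply h1; linear_combination -h
  · intro h; apply h3; linear_combination -h
  · intro h; apply h4; linear_combination -h
  · intro h; apply h2; linear_combination -h
  · intro h; apply h4; linear_combination -h
  · intro h; apply h5; linear_combination -h

theorem gw_move (hk : 6 ≤ k) (hm : 8 ≤ m) (hr : r + 3 ≤ m) {j : ZMod m} {p : I k m r}
    (h : tf (pt 2 j : I k m r) = p) (hc : p ≠ cp k m r) (hA : Fx (A 0 0) p) :
    ac (gw hk hr) (e (pt 2 j : I k m r)) = e p ∧ ac (gw hk hr) (f (pt 2 j : I k m r)) = f p := by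
  have h' : tp hk hr (pt 2 j) = p := h
  rw [(gw_two hk hm hr j).1, (gw_two hk hm hr j).2]
  simp only [gv, gB, ac_mul, ac_perm_e, ac_perm_f, h']
  rw [(Fx_Te hc).1, (Fx_Tf hc).1, hA.1, (Fx_Te hc).2, (Fx_Tf hc).2, hA.2]
  exact ⟨rfl, rfl⟩

theorem gw_c (hk : 6 ≤ k) (hm : 8 ≤ m) (hr : r + 3 ≤ m) :
    ac (gw hk hr) (e (cp k m r)) = e (cp k m r) + f (cp k m r) ∧
    ac (gw hk hr) (f (cp k m r)) = - e (cp k m r) := by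
  have h' : tp hk hr (cp k m r) = cp k m r := by
    rw [tp_apply]
    apply tf_col
    rw [ZMod.val_natCast_of_lt (by omega)]; omega
  have hA : Fx (A 0 0) (cp k m r) := Fx_A hm (kne hk).2.1 _ _
  rw [(gw_two hk hm hr _).1, (gw_two hk hm hr _).2]
  simp only [gv, gB, ac_mul, ac_perm_e, ac_perm_f, h']
  constructor
  · rw [ac_T, ac_T]
    simp only [om_ee, om_ef]
    simp [ac_add, hA.1, hA.2, om_ef]
  · rw [ac_T, ac_T]
    simp [om_fe, om_ff, om_ef, ac_neg, ac_add, om_add_left, om_neg_left, hA.1, hA.2]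

theorem R_ac {ι : Type} [Fintype ι] [DecidableEq ι] {G : Subgroup (Sp ι)} {g : Sp ι} (hg : g ∈ G)
    {p p' s s' : ι} (hne : p ≠ s) (h : R G p s) (h1 : ac g (e p) = e p') (h2 : ac g (f s) = f s') :
    R G p' s' := by
  have := conj_mem hg (h.resolve_left hne)
  rw [h1, h2] at this
  exact Or.inr this

theorem R_next (hk : 6 ≤ k) (hm : 8 ≤ m) (hr : r + 3 ≤ m) (i : ZMod k) (j j' : ZMod m) :
    R (gG hk hr) (pt i j : I k m r) (pt (i + 1) j') := by
  obtain ⟨h1, h2, h3, h4, h5⟩ := kne hk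
  have h32 : (3 : ZMod k) ≠ 2 := fun h => h1 (by linear_combination h)
  have key : R (gG hk hr) (pt 2 ((r + 2 : ℕ) : ZMod m) : I k m r) (pt 3 (r : ZMod m)) := by
    refine R_ac (gw_mem hk hr) ?_ (R_level hk hm hr 2 ((r + 2 : ℕ) : ZMod m) (r : ZMod m))
      (gw_move hk hm hr (tf_col ?_) ?_ (Fx_A hm h2 _ _)).1
      (gw_move hk hm hr (tf_two_r hr) (by simp [h32]) (Fx_A hm h3 _ _)).2
    · intro h
      have := zmod_cast_inj (by omega) (by omega) (congrArg Prod.snd (Sum.inl.inj h))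
      omega
    · rw [ZMod.val_natCast_of_lt (by omega)]; omega
    · intro h
      have := zmod_cast_inj (by omega) (by omega) (congrArg Prod.snd (Sum.inl.inj h))
      omega
  have k2 := R_xp hk hr (s := i - 2) key
  have e2 : (2 : ZMod k) + (i - 2) = i := by ring
  have e3 : (3 : ZMod k) + (i - 2) = i + 1 := by ring
  rw [e2, e3] at k2
  exact ((R_level hk hm hr _ _ _).trans k2).trans (R_level hk hm hr _ _ _)

theorem R_inl (hk : 6 ≤ k) (hm : 8 ≤ m) (hr : r + 3 ≤ m) (i i' : ZMod k) (j j' : ZMod m) :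
    R (gG hk hr) (pt i j : I k m r) (pt i' j') := by
  have key : ∀ d : ℕ, R (gG hk hr) (pt i j : I k m r) (pt (i + (d : ZMod k)) j') := by
    intro d
    induction d with
    | zero => simpa using R_level (r := r) hk hm hr i j j'
    | succ d ih =>
      have := ih.trans (R_next hk hm hr _ j' j')
      have e1 : i + ((d + 1 : ℕ) : ZMod k) = i + (d : ZMod k) + 1 := by push_cast; ring
      rwa [e1]
  have := key (i' - i).val
  rw [ZMod.natCast_zmod_val] at this
  have e1 : i + (i' - i) = i' := by ring
  rwa [e1] at this

theorem R_all (hk : 6 ≤ k) (hm : 8 ≤ m) (hr : r + 3 ≤ m) (p s : I k m r) :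
    R (gG hk hr) p s := by
  obtain ⟨h1, h2, h3, h4, h5⟩ := kne hk
  have hne : (2 : ZMod k) ≠ -1 := fun h => h3 (by linear_combination h)
  have mv := fun t : Fin r => gw_move hk hm hr (tf_two_lt hr t) (by simp) (Fx_A_inr hm _ t)
  have to_d : ∀ p : I k m r, R (gG hk hr) p (pt (-1) 0) := by
    rintro (⟨i, j⟩ | t)
    · exact R_inl hk hm hr _ _ _ _
    · exact R_ac (gw_mem hk hr) (by simp [hne]) (R_inl hk hm hr 2 (-1) ((t : ℕ) : ZMod m) 0)
        (mv t).1 (gw_fix hk hm hr 0).2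
  have from_d : ∀ p : I k m r, R (gG hk hr) (pt (-1) 0) p := by
    rintro (⟨i, j⟩ | t)
    · exact R_inl hk hm hr _ _ _ _
    · exact R_ac (gw_mem hk hr) (by simp [hne.symm]) (R_inl hk hm hr (-1) 2 0 ((t : ℕ) : ZMod m))
        (gw_fix hk hm hr 0).1 (mv t).2
  exact (to_d p).trans (from_d s)

theorem gG_top (hk : 6 ≤ k) (hm : 8 ≤ m) (hr : r + 3 ≤ m) :
    (gG hk hr : Subgroup (Sp (I k m r))) = ⊤ := by
  obtain ⟨h1, h2, h3, h4, h5⟩ := kne hk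
  have hne : (2 : ZMod k) ≠ -1 := fun h => h3 (by linear_combination h)
  have hcd : cp k m r ≠ pt (-1) 0 := by simp [hne]
  have hX : ∀ i j, i ≠ j → X (e i) (f j) ∈ (gG hk hr : Subgroup (Sp (I k m r))) :=
    fun i j h => (R_all hk hm hr i j).resolve_left h
  have ce := (gw_c (r := r) hk hm hr).1
  have cf := (gw_c (r := r) hk hm hr).2
  have de := (gw_fix (r := r) hk hm hr 0).1
  have df := (gw_fix (r := r) hk hm hr 0).2
  have wm := gw_mem (r := r) hk hr
  generalize (gw hk hr : Sp (I k m r)) = w at *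
  generalize (gG hk hr : Subgroup (Sp (I k m r))) = G at *
  generalize (pt (-1) 0 : I k m r) = d at *
  generalize cp k m r = c at *
  have wef : ac w (e c + f c) = f c := by rw [ac_add, ce, cf]; simp
  have fin : ∀ p : V (I k m r), om (e c) p = 0 → om (f c) p = 0 → X (e c) p ∈ G →
      X (f c) p ∈ G → X (e c + f c) p ∈ G → T p ∈ G := by
    intro p o1 o2 m1 m2 m3
    have hmem := mul_mem (mul_mem m3 (inv_mem m1)) (inv_mem m2)
    rcases X_add o1 o2 (by simp [om_ef]) with h | h
    · rwa [h] at hmem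
    · rw [h] at hmem; exact inv_mem_iff.1 hmem
  refine gen' d ?_ ?_ hX
  · have m2 : X (f c) (e d) ∈ G := by
      rw [X_comm (by simp [om_fe, hcd])]; exact hX d c hcd.symm
    have wi := inv_mem wm
    have m3 := conj_mem wi m2
    rw [ac_inv_eq wef, ac_inv_eq de] at m3
    have m1 := conj_mem wi m3
    rw [ac_inv_eq ce, ac_inv_eq de] at m1
    exact fin _ (om_ee _ _) (by simp [om_fe, hcd]) m1 m2 m3
  · have m1 := hX c d hcd
    have m3 := conj_mem wm m1
    rw [ce, df] at m3
    have m2 := conj_mem wm m3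
    rw [wef, df] at m2
    exact fin _ (by simp [om_ef, hcd]) (om_ff _ _) m1 m2 m3

theorem exists_three (hk : 6 ≤ k) (hm : 8 ≤ m) (hr : r + 3 ≤ m) :
    ∃ M₁ M₂ M₃ : Sp (I k m r),
      orderOf M₁ = k ∧ orderOf M₂ = k ∧ orderOf M₃ = k ∧ Subgroup.closure {M₁, M₂, M₃} = ⊤ := by
  have h : orderOf (gx : Sp (I k m r)) = k := by rw [gx, orderOf_perm, orderOf_xp]
  refine ⟨gx, gy, gz hk hr, h, ?_, ?_, gG_top hk hm hr⟩
  · rw [gy, orderOf_conj', h]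
  · rw [gz, orderOf_conj', h]

theorem transfer {α β : Type} [Group α] [Group β] (φ : α ≃* β) {k : ℕ}
    (h : ∃ M₁ M₂ M₃ : α,
      orderOf M₁ = k ∧ orderOf M₂ = k ∧ orderOf M₃ = k ∧ Subgroup.closure {M₁, M₂, M₃} = ⊤) :
    ∃ M₁ M₂ M₃ : β,
      orderOf M₁ = k ∧ orderOf M₂ = k ∧ orderOf M₃ = k ∧ Subgroup.closure {M₁, M₂, M₃} = ⊤ := by
  obtain ⟨a, c, d, h1, h2, h3, h4⟩ := h
  refine ⟨φ a, φ c, φ d, by rw [φ.orderOf_eq, h1], by rw [φ.orderOf_eq, h2],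
    by rw [φ.orderOf_eq, h3], ?_⟩
  have := congrArg (Subgroup.map φ.toMonoidHom) h4
  rw [MonoidHom.map_closure, Subgroup.map_top_of_surjective _ φ.surjective] at this
  rw [← this]
  congr 1
  simp [Set.image_insert_eq]

end Final
end SpGen

/-- For `k ≥ 6` and `n ≥ 2((k - 1)² + 1)`, the integral symplectic group
`Sp(2n, ℤ)` is generated by three elements of order exactly `k`. -/
theorem Sp_2n_Z_generated_by_three_elements_of_order_k
    (k n : ℕ) (hk : 6 ≤ k) (hn : 2 * ((k - 1) ^ 2 + 1) ≤ n) :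
    ∃ M₁ M₂ M₃ : Matrix.symplecticGroup (Fin n) ℤ,
      orderOf M₁ = k ∧ orderOf M₂ = k ∧ orderOf M₃ = k ∧
      Subgroup.closure {M₁, M₂, M₃} = ⊤ := by
  have hlow : 2 * k - 4 ≤ n / k := by
    rw [Nat.le_div_iff_mul_le (by omega)]
    refine le_trans ?_ hn
    obtain ⟨l, rfl⟩ : ∃ l, k = l + 2 := ⟨k - 2, by omega⟩
    have e1 : 2 * (l + 2) - 4 = 2 * l := by omega
    have e2 : l + 2 - 1 = l + 1 := by omega
    rw [e1, e2]
    nlinarith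
  have hlt : n % k < k := Nat.mod_lt _ (by omega)
  have : NeZero k := ⟨by omega⟩
  have : NeZero (n / k) := ⟨by omega⟩
  have hcard : Fintype.card (SpGen.I k (n / k) (n % k)) = n := by
    simp only [SpGen.I, Fintype.card_sum, Fintype.card_prod, ZMod.card, Fintype.card_fin]
    exact Nat.div_add_mod n k
  exact SpGen.transfer (SpGen.spEquiv (Fintype.equivFinOfCardEq hcard))
    (SpGen.exists_three (k := k) (m := n / k) (r := n % k) hk (by omega) (by omega))
end

section
/- Let k ≥ 5. The number of integers g with 1 ≤ g < (k − 1)(k − 3) such that either g = a·k + b·(k − 1) for some nonnegative integers a, b, or g = a·k + 1 for some positive integer a, is exactly (k² − 3k − 4)/2. -/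
/-- For `k ≥ 5`, exactly `(k² - 3k - 4)/2` of the integers `g` with
`1 ≤ g < (k - 1)(k - 3)` are of the form `a·k + b·(k - 1)` with `a, b ≥ 0`
or of the form `a·k + 1` with `a ≥ 1`. -/
theorem count_of_small_genera_of_correct_form (k : ℤ) (hk : 5 ≤ k) :
    ({g : ℤ | 1 ≤ g ∧ g < (k - 1) * (k - 3) ∧
        ((∃ a b : ℤ, 0 ≤ a ∧ 0 ≤ b ∧ g = a * k + b * (k - 1)) ∨
          (∃ a : ℤ, 1 ≤ a ∧ g = a * k + 1))}.ncard : ℤ)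
      = (k ^ 2 - 3 * k - 4) / 2 := by
  obtain ⟨m, hm⟩ : ∃ m : ℕ, k = m + 4 := ⟨(k - 4).toNat, by omega⟩
  have key : {g : ℤ | 1 ≤ g ∧ g < (k - 1) * (k - 3) ∧
        ((∃ a b : ℤ, 0 ≤ a ∧ 0 ≤ b ∧ g = a * k + b * (k - 1)) ∨
          (∃ a : ℤ, 1 ≤ a ∧ g = a * k + 1))} =
      (((Finset.range m).biUnion
        (fun n : ℕ => Finset.Icc (((n : ℤ) + 1) * (k - 1)) (((n : ℤ) + 1) * k + 1)) :
        Finset ℤ) : Set ℤ) := by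
    ext g
    simp only [Set.mem_setOf_eq, Finset.coe_biUnion, Set.mem_iUnion, Finset.coe_Icc,
      Set.mem_Icc, Finset.coe_range, Set.mem_Iio, exists_prop]
    constructor
    · rintro ⟨h1, h2, ⟨a, b, ha, hb, rfl⟩ | ⟨a, ha, rfl⟩⟩
      · have hpos : 1 ≤ a + b := by
          by_contra h
          have : a = 0 := by omega
          have : b = 0 := by omega
          subst a; subst b
          simp at h1
        have hlt : a + b < k - 3 := by
          by_contra! h
          nlinarith
        refine ⟨(a + b - 1).toNat, by omega, ?_⟩
        have : (((a + b - 1).toNat : ℕ) : ℤ) = a + b - 1 := by omega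
        rw [this]
        constructor <;> nlinarith
      · have hlt : a < k - 3 := by
          by_contra! h
          nlinarith
        refine ⟨(a - 1).toNat, by omega, ?_⟩
        have : (((a - 1).toNat : ℕ) : ℤ) = a - 1 := by omega
        rw [this]
        constructor <;> nlinarith
    · rintro ⟨n, hn, h1, h2⟩
      have hn' : (n : ℤ) + 1 ≤ k - 4 := by omega
      have hn0 : (0 : ℤ) ≤ n := by omega
      refine ⟨by nlinarith, by nlinarith, ?_⟩
      rcases h2.lt_or_eq with h | h
      · left
        refine ⟨g - ((n : ℤ) + 1) * (k - 1), ((n : ℤ) + 1) * k - g, by linarith, by linarith, by ring⟩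
      · right
        exact ⟨n + 1, by omega, h⟩
  rw [key, Set.ncard_coe_finset, Finset.card_biUnion]
  · have hc : ∀ n : ℕ, (Finset.Icc (((n : ℤ) + 1) * (k - 1)) (((n : ℤ) + 1) * k + 1)).card
        = n + 3 := by
      intro n
      rw [Int.card_Icc]
      have : ((n : ℤ) + 1) * k + 1 + 1 - ((n : ℤ) + 1) * (k - 1) = n + 3 := by ring
      rw [this]; omega
    simp only [hc]
    have hs : ∀ m : ℕ, 2 * ((∑ n ∈ Finset.range m, (n + 3) : ℕ) : ℤ) = m * (m + 5) := by
      intro m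
      induction m with
      | zero => simp
      | succ m ih =>
        rw [Finset.sum_range_succ]
        push_cast at ih ⊢
        linarith
    have h2 : k ^ 2 - 3 * k - 4 = 2 * ((∑ n ∈ Finset.range m, (n + 3) : ℕ) : ℤ) := by
      rw [hs, hm]; ring
    rw [h2]; omega
  · have aux : ∀ i j : ℕ, i < m → i < j → ∀ x : ℤ, x ≤ ((i : ℤ) + 1) * k + 1 →
        ((j : ℤ) + 1) * (k - 1) ≤ x → False := by
      intro i j hi hij x h1 h2
      have : (i : ℤ) + 1 ≤ j := by omega
      have : (i : ℤ) + 1 ≤ k - 4 := by omega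
      nlinarith
    intro i hi j hj hij
    simp only [Finset.coe_range, Set.mem_Iio] at hi hj
    rw [Function.onFun, Finset.disjoint_left]
    intro x hx hy
    rw [Finset.mem_Icc] at hx hy
    rcases lt_or_gt_of_ne hij with h | h
    · exact aux i j hi h x hx.2 hy.1
    · exact aux j i hj h x hy.2 hx.1
end

section
/- Let k ≥ 3 and n ≥ 2k. Then there exist three permutations a, b, c in the symmetric group Σ_n, each of order exactly k, such that the subgroup G generated by {a, b, c} contains a 3-cycle and acts 2-transitively on the underlying n-element set (i.e., for any two ordered pairs of distinct points there is an element of G carrying the first pair to the second). -/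
/-- A permutation that rotates a family of disjoint blocks of length `k`. -/
lemma exists_block_perm {k n : ℕ} (hk : 3 ≤ k) {J : Type} [Nonempty J] (e : J → ℕ → ℕ)
    (he : ∀ j i, i < k → e j i < n)
    (inj : ∀ j i j' i', i < k → i' < k → e j i = e j' i' → j = j' ∧ i = i') :
    ∃ σ : Equiv.Perm (Fin n), orderOf σ = k ∧
      (∀ j i (h : i + 1 < k),
        σ ⟨e j i, he j i (by omega)⟩ = ⟨e j (i + 1), he j (i + 1) h⟩) ∧
      (∀ x : Fin n, (∀ j i, i < k → e j i ≠ x) → σ x = x) := by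
  classical
  have : NeZero k := ⟨by omega⟩
  have : Fact (1 < k) := ⟨by omega⟩
  let ι : J × ZMod k ↪ Fin n :=
    ⟨fun x => ⟨e x.1 x.2.val, he _ _ (ZMod.val_lt _)⟩, by
      rintro ⟨j, z⟩ ⟨j', z'⟩ h
      have h' : e j z.val = e j' z'.val := congrArg Fin.val h
      obtain ⟨h1, h2⟩ := inj j _ j' _ (ZMod.val_lt z) (ZMod.val_lt z') h'
      rw [h1, ZMod.val_injective k h2]⟩
  let ρ : Equiv.Perm (J × ZMod k) := Equiv.prodCongr (Equiv.refl J) (Equiv.addRight 1)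
  have hρ : ∀ x, ρ x = (x.1, x.2 + 1) := fun x => rfl
  have hpow : ∀ (m : ℕ) x, (ρ ^ m) x = (x.1, x.2 + m) := by
    intro m
    induction m with
    | zero => intro x; simp
    | succ m ih =>
      intro x
      rw [pow_succ', Equiv.Perm.mul_apply, ih, hρ]
      simp [add_assoc]
  have hord : orderOf ρ = k := by
    apply Nat.dvd_antisymm
    · rw [orderOf_dvd_iff_pow_eq_one]
      ext1 x
      rw [hpow]; simp
    · have h := pow_orderOf_eq_one ρ
      obtain ⟨j⟩ := ‹Nonempty J›
      have h2 := hpow (orderOf ρ) (j, 0)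
      rw [h] at h2
      have h3 := congrArg Prod.snd h2
      simp only [Equiv.Perm.coe_one, id_eq, zero_add] at h3
      exact (ZMod.natCast_eq_zero_iff _ _).1 h3.symm
  refine ⟨Equiv.Perm.viaEmbedding ρ ι, ?_, ?_, ?_⟩
  · rw [← Equiv.Perm.viaEmbeddingHom_apply,
      orderOf_injective _ (Equiv.Perm.viaEmbeddingHom_injective ι), hord]
  · intro j i h
    have hi : ((i : ZMod k)).val = i := ZMod.val_cast_of_lt (by omega)
    have hi' : ((i : ZMod k) + 1).val = i + 1 := by
      have := ZMod.val_cast_of_lt h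
      push_cast at this
      exact this
    have h1 := Equiv.Perm.viaEmbedding_apply ρ ι (j, (i : ZMod k))
    rw [hρ] at h1
    have e1 : ι (j, (i : ZMod k)) = ⟨e j i, he j i (by omega)⟩ := by
      apply Fin.ext; change e j _ = _; rw [hi]
    have e2 : ι (j, (i : ZMod k) + 1) = ⟨e j (i + 1), he j (i + 1) h⟩ := by
      apply Fin.ext; change e j _ = _; rw [hi']
    rw [e1, e2] at h1
    exact h1
  · intro x hx
    apply Equiv.Perm.viaEmbedding_apply_of_notMem
    rintro ⟨⟨j, z⟩, h⟩
    exact hx j z.val (ZMod.val_lt z) (congrArg Fin.val h)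

/-- Invariant sets contain whole blocks. -/
lemma block_inv {k n : ℕ} {J : Type} (e : J → ℕ → ℕ)
    (he : ∀ j i, i < k → e j i < n) (σ : Equiv.Perm (Fin n))
    (hσ : ∀ j i (h : i + 1 < k),
        σ ⟨e j i, he j i (by omega)⟩ = ⟨e j (i + 1), he j (i + 1) h⟩)
    (S : Set (Fin n)) (hS : ∀ x, x ∈ S ↔ σ x ∈ S) (j : J) (i i' : ℕ) (hi : i < k) (hi' : i' < k) :
    (⟨e j i, he j i hi⟩ : Fin n) ∈ S ↔ (⟨e j i', he j i' hi'⟩ : Fin n) ∈ S := by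
  have key : ∀ i (hi : i < k), (⟨e j i, he j i hi⟩ : Fin n) ∈ S ↔
      (⟨e j 0, he j 0 (by omega)⟩ : Fin n) ∈ S := by
    intro i
    induction i with
    | zero => intro hi; rfl
    | succ i ih =>
      intro hi
      rw [← ih (by omega), hS ⟨e j i, _⟩, hσ j i hi]
  have h2 := key i' hi'
  rw [h2]
  exact key i hi

/-- The commutator of two permutations whose supports meet in one point. -/
lemma commutator_eq {α : Type} [DecidableEq α] (a c : Equiv.Perm α) (p : α)
    (hap : a p ≠ p) (hcp : c p ≠ p) (hac : ∀ x, x ≠ p → a x = x ∨ c x = x) :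
    a * c * a⁻¹ * c⁻¹ = Equiv.swap p (c p) * Equiv.swap p (a p) := by
  have hcap : c (a p) = a p := (hac _ hap).resolve_left (fun h => hap (a.injective h))
  have hacp : a (c p) = c p := (hac _ hcp).resolve_right (fun h => hcp (c.injective h))
  have hne : a p ≠ c p := by
    intro h
    rw [h] at hcap
    exact hcp (c.injective hcap)
  have : a * c = Equiv.swap p (c p) * Equiv.swap p (a p) * (c * a) := by
    ext1 x
    simp only [Equiv.Perm.mul_apply]
    by_cases hx : x = p
    · subst hx
      rw [hacp, hcap, Equiv.swap_apply_right, Equiv.swap_apply_left]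
    · rcases hac x hx with h | h
      · rw [h]
        by_cases hcx : c x = p
        · rw [hcx, Equiv.swap_apply_left, Equiv.swap_apply_of_ne_of_ne hap hne]
        · have h1 : c x ≠ c p := fun h => hx (c.injective h)
          have h2 : a (c x) = c x := by
            rcases hac _ hcx with h' | h'
            · exact h'
            · rw [c.injective h', h]
          have h3 : c x ≠ a p := by
            intro h3
            rw [h3] at h2
            exact hap (a.injective h2)
          rw [h2, Equiv.swap_apply_of_ne_of_ne hcx h3, Equiv.swap_apply_of_ne_of_ne hcx h1]
      · rw [h]
        by_cases hax : a x = p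
        · rw [hax, Equiv.swap_apply_of_ne_of_ne hcp hne.symm, Equiv.swap_apply_right]
        · have h1 : a x ≠ a p := fun h => hx (a.injective h)
          have h2 : c (a x) = a x := by
            rcases hac _ hax with h' | h'
            · rw [a.injective h', h]
            · exact h'
          have h3 : a x ≠ c p := by
            intro h3
            rw [h3] at h2
            exact hcp (c.injective h2)
          rw [h2, Equiv.swap_apply_of_ne_of_ne hax h1, Equiv.swap_apply_of_ne_of_ne hax h3]
  rw [this]
  group

/-- Group-theoretic part. -/
lemma two_trans_of {n : ℕ} (hn : 4 ≤ n) (a b c : Equiv.Perm (Fin n)) (p q : Fin n)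
    (hap : a p ≠ p) (hcp : c p ≠ p) (hac : ∀ x, x ≠ p → a x = x ∨ c x = x)
    (hq : ∀ S : Set (Fin n), p ∈ S → (∀ x, x ∈ S ↔ c x ∈ S) → q ∈ S ∧ b q ∈ S)
    (htr : ∀ S : Set (Fin n), p ∈ S → (∀ x, x ∈ S ↔ a x ∈ S) → (∀ x, x ∈ S ↔ b x ∈ S) →
      (∀ x, x ∈ S ↔ c x ∈ S) → S = Set.univ) :
    (∃ τ ∈ Subgroup.closure {a, b, c}, Equiv.Perm.IsThreeCycle τ) ∧
      (∀ i j i' j' : Fin n, i ≠ j → i' ≠ j' →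
        ∃ σ ∈ Subgroup.closure {a, b, c}, σ i = i' ∧ σ j = j') := by
  classical
  set G := Subgroup.closure {a, b, c} with hG
  have ha : a ∈ G := Subgroup.subset_closure (by simp)
  have hb : b ∈ G := Subgroup.subset_closure (by simp)
  have hc : c ∈ G := Subgroup.subset_closure (by simp)
  have hcap : c (a p) = a p := (hac _ hap).resolve_left (fun h => hap (a.injective h))
  have hne : a p ≠ c p := by
    intro h
    rw [h] at hcap
    exact hcp (c.injective hcap)
  have hcomm := commutator_eq a c p hap hcp hac
  set τ := a * c * a⁻¹ * c⁻¹ with hτ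
  have hτG : τ ∈ G := mul_mem (mul_mem (mul_mem ha hc) (inv_mem ha)) (inv_mem hc)
  have hτ3 : τ.IsThreeCycle := by
    rw [hcomm]
    exact Equiv.Perm.isThreeCycle_swap_mul_swap_same hcp.symm hap.symm hne.symm
  have hτp : τ p = a p := by
    rw [hcomm, Equiv.Perm.mul_apply, Equiv.swap_apply_left, Equiv.swap_apply_of_ne_of_ne hap hne]
  have hτa : τ (a p) = c p := by
    rw [hcomm, Equiv.Perm.mul_apply, Equiv.swap_apply_right, Equiv.swap_apply_left]
  have hτx : ∀ x, x ≠ p → x ≠ a p → x ≠ c p → τ x = x := by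
    intro x h1 h2 h3
    rw [hcomm, Equiv.Perm.mul_apply, Equiv.swap_apply_of_ne_of_ne h1 h2,
      Equiv.swap_apply_of_ne_of_ne h1 h3]
  have hτc : τ (c p) = p := by
    rw [hcomm, Equiv.Perm.mul_apply, Equiv.swap_apply_of_ne_of_ne hcp hne.symm,
      Equiv.swap_apply_right]
  have horb : ∀ x : Fin n, x ∈ MulAction.orbit G p := by
    have hinv : ∀ g ∈ G, ∀ x, x ∈ MulAction.orbit G p ↔ g x ∈ MulAction.orbit G p := by
      intro g hg x
      have h := MulAction.orbit_eq_iff (G := G) (a := x) (b := p)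
      have h' := MulAction.orbit_eq_iff (G := G) (a := (⟨g, hg⟩ : G) • x) (b := p)
      rw [MulAction.orbit_smul] at h'
      exact h.symm.trans h'
    have := htr (MulAction.orbit G p) (MulAction.mem_orbit_self p) (hinv a ha) (hinv b hb)
      (hinv c hc)
    intro x
    rw [this]; trivial
  have hpre : MulAction.IsPretransitive G (Fin n) := by
    rw [MulAction.isPretransitive_iff_base p]
    exact horb
  have hprim : MulAction.IsPreprimitive G (Fin n) := by
    apply MulAction.IsPreprimitive.of_isTrivialBlock_base p
    intro B hpB hB
    by_cases hsub : B.Subsingleton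
    · exact Or.inl hsub
    right
    -- a group element carrying a point of `B` into `B` preserves `B`
    have hinv : ∀ g ∈ G, ∀ x, x ∈ B → g x ∈ B → ∀ y, y ∈ B ↔ g y ∈ B := by
      intro g hg x hx hgx y
      have h := hB.smul_eq_of_mem (g := (⟨g, hg⟩ : G)) hx hgx
      conv_rhs => rw [← h]
      exact (Set.smul_mem_smul_set_iff (a := (⟨g, hg⟩ : G))).symm
    have hy : ∃ y ∈ B, y ≠ p := by
      by_contra hcon
      push Not at hcon
      exact hsub (fun x hx y hy => (hcon x hx).trans (hcon y hy).symm)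
    obtain ⟨y, hyB, hyp⟩ := hy
    have hτB : ∀ y, y ∈ B ↔ τ y ∈ B := by
      by_cases h1 : y = a p
      · exact hinv τ hτG p hpB (by rw [hτp, ← h1]; exact hyB)
      by_cases h2 : y = c p
      · exact hinv τ hτG y hyB (by rw [h2, hτc]; exact hpB)
      · exact hinv τ hτG y hyB (by rw [hτx y hyp h1 h2]; exact hyB)
    have haB : a p ∈ B := by rw [← hτp]; exact (hτB p).1 hpB
    have hcB : c p ∈ B := by rw [← hτa]; exact (hτB _).1 haB
    have hcinv := hinv c hc p hpB hcB
    obtain ⟨hq1, hq2⟩ := hq B hpB hcinv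
    exact htr B hpB (hinv a ha p hpB haB) (hinv b hb q hq1 hq2) hcinv
  have halt := Equiv.Perm.alternatingGroup_le_of_isPreprimitive_of_isThreeCycle_mem hprim hτ3 hτG
  refine ⟨⟨τ, hτG, hτ3⟩, ?_⟩
  intro i j i' j' hij hij'
  have hmt := alternatingGroup.isMultiplyPretransitive (Fin n)
  have h2 : MulAction.IsMultiplyPretransitive (alternatingGroup (Fin n)) (Fin n) 2 :=
    MulAction.isMultiplyPretransitive_of_le (n := Nat.card (Fin n) - 2)
      (by rw [Nat.card_fin]; omega) (Nat.sub_le _ _)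
  rw [MulAction.is_two_pretransitive_iff] at h2
  obtain ⟨g, hg1, hg2⟩ := h2 hij hij'
  exact ⟨g, halt g.2, hg1, hg2⟩

/-- For `k ≥ 3` and `n ≥ 2k`, there are three permutations of order exactly `k`
in `Σ_n` generating a subgroup that contains a 3-cycle and acts 2-transitively
on the `n` points. -/
theorem three_order_k_perms_generate_two_transitive_group_with_three_cycle
    (k n : ℕ) (hk : 3 ≤ k) (hn : 2 * k ≤ n) :
    ∃ a b c : Equiv.Perm (Fin n),
      orderOf a = k ∧ orderOf b = k ∧ orderOf c = k ∧
      (∃ τ ∈ Subgroup.closure {a, b, c}, Equiv.Perm.IsThreeCycle τ) ∧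
      (∀ i j i' j' : Fin n, i ≠ j → i' ≠ j' →
        ∃ σ ∈ Subgroup.closure {a, b, c}, σ i = i' ∧ σ j = j') := by
  obtain ⟨K, rfl⟩ : ∃ K, k = K + 1 := ⟨k - 1, by omega⟩
  have hK : 2 ≤ K := by omega
  -- `n - 1 = M * K + r`
  obtain ⟨M, r, hr, hMr⟩ : ∃ M r, r < K ∧ n = M * K + r + 1 :=
    ⟨(n - 1) / K, (n - 1) % K, Nat.mod_lt _ (by omega), by
      have := Nat.div_add_mod' (n - 1) K
      omega⟩
  have hM : 2 ≤ M := by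
    by_contra h
    have : M * K ≤ 1 * K := Nat.mul_le_mul_right K (by omega)
    omega
  have hmul : ∀ x y : ℕ, x ≤ y → x * K ≤ y * K := fun x y h => Nat.mul_le_mul_right K h
  -- the single cycle `c`
  let ec : Unit → ℕ → ℕ := fun _ i => i
  have hec : ∀ j i, i < K + 1 → ec j i < n := by intro j i hi; simp only [ec]; omega
  obtain ⟨c, hc1, hc2, hc3⟩ := exists_block_perm hk ec hec (by
    intro j i j' i' _ _ h; exact ⟨rfl, h⟩)
  -- the odd blocks
  let ea : {j : ℕ // 2 * j + 1 < M} → ℕ → ℕ := fun j i => (2 * j.1 + 1) * K + i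
  have hea : ∀ j i, i < K + 1 → ea j i < n := by
    rintro ⟨j, hj⟩ i hi
    simp only [ea]
    have := hmul (2 * j + 1 + 1) M (by omega)
    rw [Nat.add_mul (2 * j + 1)] at this
    omega
  have : Nonempty {j : ℕ // 2 * j + 1 < M} := ⟨⟨0, by omega⟩⟩
  have hlt : ∀ x y i i' : ℕ, x + 2 ≤ y → i < K + 1 → x * K + i < y * K + i' := by
    intro x y i i' h hi
    have := hmul _ _ h
    rw [Nat.add_mul] at this
    omega
  obtain ⟨a, ha1, ha2, ha3⟩ := exists_block_perm hk ea hea (by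
    rintro ⟨j, hj⟩ i ⟨j', hj'⟩ i' hi hi' h
    simp only [ea] at h
    rcases lt_trichotomy j j' with hl | hl | hl
    · have := hlt (2 * j + 1) (2 * j' + 1) i i' (by omega) hi
      omega
    · subst hl
      exact ⟨rfl, by omega⟩
    · have := hlt (2 * j' + 1) (2 * j + 1) i' i (by omega) hi'
      omega)
  -- the even blocks, with the block `0` replaced by the one wrapping around
  let eb : {j : ℕ // 2 * j < M} → ℕ → ℕ := fun j i =>
    if j.1 = 0 then (if i < r then n - r + i else i - r) else (2 * j.1) * K + i
  have hbb : ∀ j i, j ≠ 0 → 2 * j < M → i < K + 1 →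
      2 * K ≤ 2 * j * K + i ∧ 2 * j * K + i < n - r := by
    intro j i hj0 hj hi
    have h1 := hmul (2 * j + 1) M (by omega)
    have h2 := hmul 2 (2 * j) (by omega)
    rw [Nat.add_mul] at h1
    omega
  have heb : ∀ j i, i < K + 1 → eb j i < n := by
    rintro ⟨j, hj⟩ i hi
    simp only [eb]
    split_ifs with h1 h2
    · omega
    · omega
    · have := hbb j i h1 hj hi
      omega
  have : Nonempty {j : ℕ // 2 * j < M} := ⟨⟨0, by omega⟩⟩
  obtain ⟨b, hb1, hb2, hb3⟩ := exists_block_perm hk eb heb (by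
    rintro ⟨j, hj⟩ i ⟨j', hj'⟩ i' hi hi' h
    simp only [eb] at h
    by_cases h0 : j = 0
    · subst h0
      by_cases h0' : j' = 0
      · subst h0'
        refine ⟨rfl, ?_⟩
        simp only [if_true] at h
        split_ifs at h <;> omega
      · have := hbb j' i' h0' hj' hi'
        simp only [if_true, if_neg h0'] at h
        split_ifs at h <;> omega
    · by_cases h0' : j' = 0
      · subst h0'
        have := hbb j i h0 hj hi
        simp only [if_true, if_neg h0] at h
        split_ifs at h <;> omega
      · simp only [if_neg h0, if_neg h0'] at h
        rcases lt_trichotomy j j' with hl | hl | hl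
        · have := hlt (2 * j) (2 * j') i i' (by omega) hi
          omega
        · subst hl
          exact ⟨rfl, by omega⟩
        · have := hlt (2 * j') (2 * j) i' i (by omega) hi'
          omega)
  refine ⟨a, b, c, ha1, hb1, hc1, ?_⟩
  have hcS := block_inv ec hec c hc2
  have haS := block_inv ea hea a ha2
  have hbS := block_inv eb heb b hb2
  have hp : ∃ p : Fin n, p.1 = K := ⟨⟨K, by omega⟩, rfl⟩
  obtain ⟨p, hpK⟩ := hp
  -- `c` moves `p`
  have hcp : c p ≠ p := by
    intro h
    have h1 := hc2 () (K - 1) (by omega)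
    have h2 : (⟨ec () (K - 1 + 1), hec () _ (by omega)⟩ : Fin n) = p := by
      apply Fin.ext; simp only [ec]; omega
    have h3 := congrArg Fin.val (c.injective ((h1.trans h2).trans h.symm))
    rw [hpK] at h3
    simp only [ec] at h3
    omega
  have hap : a p ≠ p := by
    have h1 := ha2 ⟨0, by omega⟩ 0 (by omega)
    have h2 : (⟨ea ⟨0, by omega⟩ 0, hea _ _ (by omega)⟩ : Fin n) = p := by
      apply Fin.ext; simp only [ea]; omega
    rw [h2] at h1
    rw [h1]
    intro h
    have h3 := congrArg Fin.val h
    rw [hpK] at h3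
    simp only [ea] at h3
    omega
  apply two_trans_of (by omega) a b c p ⟨0, by omega⟩ hap hcp
  · intro x hx
    by_cases hxK : x.1 ≤ K
    · left
      apply ha3
      rintro ⟨j, hj⟩ i hi h
      simp only [ea] at h
      apply hx
      apply Fin.ext
      have := hmul 1 (2 * j + 1) (by omega)
      omega
    · right
      apply hc3
      intro j i hi h
      simp only [ec] at h
      omega
  · intro S hpS hS
    have hpS' : (⟨ec () K, hec () K (by omega)⟩ : Fin n) ∈ S := by
      convert hpS using 1
      exact Fin.ext hpK.symm
    have h1 := hb2 ⟨0, by omega⟩ r (by omega)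
    have e1 : (⟨eb ⟨0, by omega⟩ r, heb _ _ (by omega)⟩ : Fin n) = ⟨0, by omega⟩ := by
      apply Fin.ext; simp [eb]
    have e2 : (⟨eb ⟨0, by omega⟩ (r + 1), heb _ _ (by omega)⟩ : Fin n) = ⟨1, by omega⟩ := by
      apply Fin.ext; simp [eb]
    rw [e1, e2] at h1
    rw [h1]
    exact ⟨(hcS S hS () K 0 (by omega) (by omega)).1 hpS',
      (hcS S hS () K 1 (by omega) (by omega)).1 hpS'⟩
  · intro S hpS hSa hSb hSc
    have hpS' : (⟨ec () K, hec () K (by omega)⟩ : Fin n) ∈ S := by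
      convert hpS using 1
      exact Fin.ext hpK.symm
    have hC : ∀ i (hi : i < K + 1), (⟨i, by omega⟩ : Fin n) ∈ S := fun i hi =>
      (hcS S hSc () K i (by omega) hi).1 hpS'
    have hblk : ∀ j, j < M → ∀ i, i < K + 1 → ∀ x : Fin n, x.1 = j * K + i → x ∈ S := by
      intro j
      induction j with
      | zero =>
        intro _ i hi x hx
        have : x = ⟨i, by omega⟩ := Fin.ext (by simpa using hx)
        rw [this]; exact hC i hi
      | succ j ih =>
        intro hj i hi x hx
        have hstart : ∀ y : Fin n, y.1 = (j + 1) * K → y ∈ S := fun y hy =>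
          ih (by omega) K (by omega) y (by rw [hy, Nat.add_mul, Nat.one_mul])
        rcases Nat.even_or_odd' (j + 1) with ⟨t, ht | ht⟩
        · have ht0 : t ≠ 0 := by omega
          have h1 := hbS S hSb ⟨t, by omega⟩ 0 i (by omega) hi
          have h2 := h1.1 (hstart _ (by simp only [eb, if_neg ht0]; rw [ht, Nat.add_zero]))
          convert h2 using 1
          apply Fin.ext
          simp only [eb, if_neg ht0]
          rw [hx, ht]
        · have h1 := haS S hSa ⟨t, by omega⟩ 0 i (by omega) hi
          have h2 := h1.1 (hstart _ (by simp only [ea]; rw [ht, Nat.add_zero]))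
          convert h2 using 1
          apply Fin.ext
          simp only [ea]
          rw [hx, ht]
    apply Set.eq_univ_of_forall
    intro x
    have hxn := x.2
    by_cases hx : x.1 < n - r
    · by_cases hx2 : x.1 < M * K
      · exact hblk (x.1 / K) (Nat.div_lt_of_lt_mul (by rwa [Nat.mul_comm])) (x.1 % K)
          (by have := Nat.mod_lt x.1 (show 0 < K by omega); omega) x (Nat.div_add_mod' _ _).symm
      · refine hblk (M - 1) (by omega) K (by omega) x ?_
        have : M * K = (M - 1) * K + K := by
          obtain ⟨m, rfl⟩ : ∃ m, M = m + 1 := ⟨M - 1, by omega⟩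
          rw [Nat.add_sub_cancel, Nat.add_mul, Nat.one_mul]
        omega
    · have h1 := hbS S hSb ⟨0, by omega⟩ r (x.1 - (n - r)) (by omega) (by omega)
      have h2 := h1.1 (by
        convert hC 0 (by omega) using 1
        apply Fin.ext; simp [eb])
      convert h2 using 1
      apply Fin.ext
      simp only [eb, if_true]
      rw [if_pos (by omega)]
      omega
end

section
/- Let k ≥ 5 and n ≥ 2(k − 1). Then there exist nine matrices in GL(n, ℤ), eight of which have order exactly k and one of which has order exactly 2, such that the subgroup they generate is all of GL(n, ℤ). -/
namespace GLGen
open Matrix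

abbrev G (n : ℕ) := Matrix.GeneralLinearGroup (Fin n) ℤ

/-- elementary transvection -/
def E {n : ℕ} (i j : Fin n) (h : i ≠ j) (c : ℤ) : G n where
  val := transvection i j c
  inv := transvection i j (-c)
  val_inv := by rw [transvection_mul_transvection_same i j h]; simp
  inv_val := by rw [transvection_mul_transvection_same i j h]; simp

/-- sign change in one coordinate -/
def D {n : ℕ} (i : Fin n) : G n where
  val := diagonal fun j => if j = i then -1 else 1
  inv := diagonal fun j => if j = i then -1 else 1
  val_inv := by
    rw [diagonal_mul_diagonal, ← diagonal_one]; congr 1; ext j; split_ifs <;> simp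
  inv_val := by
    rw [diagonal_mul_diagonal, ← diagonal_one]; congr 1; ext j; split_ifs <;> simp

lemma E_val {n : ℕ} (i j : Fin n) (h : i ≠ j) (c : ℤ) :
    (E i j h c : G n).val = 1 + single i j c := rfl

lemma E_inv {n : ℕ} (i j : Fin n) (h : i ≠ j) (c : ℤ) :
    (E i j h c)⁻¹ = E i j h (-c) := by
  apply Units.ext; rfl

lemma E_add {n : ℕ} (i j : Fin n) (h : i ≠ j) (c d : ℤ) :
    E i j h c * E i j h d = E i j h (c + d) := by
  apply Units.ext
  exact transvection_mul_transvection_same i j h c d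

lemma E_zpow {n : ℕ} (i j : Fin n) (h : i ≠ j) (c : ℤ) :
    (E i j h 1) ^ c = E i j h c := by
  have key : ∀ m : ℕ, (E i j h 1) ^ m = E i j h m := by
    intro m
    induction m with
    | zero => apply Units.ext; simp [E_val]
    | succ m ih => rw [pow_succ, ih, E_add]; simp
  obtain ⟨m, rfl | rfl⟩ := c.eq_nat_or_neg
  · rw [zpow_natCast, key]
  · rw [_root_.zpow_neg, zpow_natCast, key, E_inv]

lemma E_comm {n : ℕ} {i j l : Fin n} (h1 : i ≠ j) (h2 : j ≠ l) (h3 : i ≠ l) :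
    E i j h1 1 * E j l h2 1 = E i l h3 1 * E j l h2 1 * E i j h1 1 := by
  apply Units.ext
  simp only [Units.val_mul, E_val, mul_add, add_mul, one_mul, mul_one, single_mul_single_same]
  rw [single_mul_single_of_ne _ _ _ _ h2.symm, single_mul_single_of_ne _ _ _ _ h3.symm,
    single_mul_single_of_ne _ _ _ _ h3.symm]
  simp only [zero_mul, add_zero]
  abel

lemma E_comm2 {n : ℕ} {p q a b c : Fin n} (hqp : q ≠ p) (hqb : q ≠ b) (hqc : q ≠ c)
    (hap : a ≠ p) (hbp : b ≠ p) (hab : a ≠ b) (hac : a ≠ c) (hbc : b ≠ c) :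
    (E q b hqb 1 * E q c hqc (-1)) * (E a p hap 1 * E b p hbp (-1)) =
      E q p hqp (-1) * ((E a p hap 1 * E b p hbp (-1)) * (E q b hqb 1 * E q c hqc (-1))) := by
  apply Units.ext
  simp only [Units.val_mul, E_val, mul_add, add_mul, one_mul, mul_one, single_mul_single_same,
    single_mul_single_of_ne, ne_eq, Ne.symm hqp, Ne.symm hqb, Ne.symm hap, Ne.symm hbp,
    Ne.symm hab, Ne.symm hac, Ne.symm hbc, not_false_eq_true, add_zero]
  abel

/-! ### Generation of `GL(n, ℤ)` by transvections and sign changes -/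

section gen
variable {n : ℕ} {H : Subgroup (G n)}

lemma E_mul_same (i j : Fin n) (h : i ≠ j) (c : ℤ) (N : G n) (b : Fin n) :
    (E i j h c * N).val i b = N.val i b + c * N.val j b :=
  transvection_mul_apply_same i j b c N.val

lemma E_mul_ne (i j : Fin n) (h : i ≠ j) (c : ℤ) (N : G n) (a b : Fin n) (ha : a ≠ i) :
    (E i j h c * N).val a b = N.val a b :=
  transvection_mul_apply_of_ne i j a b ha c N.val

lemma D_mul (i : Fin n) (N : G n) (a b : Fin n) :
    (D i * N).val a b = (if a = i then -1 else 1) * N.val a b := by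
  show ((diagonal _ : Matrix (Fin n) (Fin n) ℤ) * N.val) a b = _
  rw [diagonal_mul]

/-- the first `m` columns are standard -/
def Std (m : ℕ) (N : G n) : Prop := ∀ i j : Fin n, j.val < m → N.val i j = (1 : Matrix (Fin n) (Fin n) ℤ) i j

lemma Std.E_mul {m : ℕ} {N : G n} (hN : Std m N) (i j : Fin n) (h : i ≠ j) (hj : m ≤ j.val) (c : ℤ) :
    Std m (E i j h c * N) := by
  intro a b hb
  by_cases ha : a = i
  · subst ha
    rw [E_mul_same, hN _ _ hb, hN _ _ hb, one_apply_ne (i := j)]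
    · simp
    · rintro rfl; omega
  · rw [E_mul_ne _ _ _ _ _ _ _ ha, hN _ _ hb]

lemma Std.inv {m : ℕ} {N : G n} (hN : Std m N) (i l : Fin n) (hl : l.val < m) :
    (N⁻¹).val i l = (1 : Matrix (Fin n) (Fin n) ℤ) i l := by
  have h1 : (N⁻¹).val * N.val = 1 := by rw [← Units.val_mul]; simp
  have h2 : ((N⁻¹).val * N.val) i l = ((N⁻¹).val * (1 : Matrix (Fin n) (Fin n) ℤ)) i l := by
    rw [mul_apply, mul_apply]
    exact Finset.sum_congr rfl fun a _ => by rw [hN a l hl]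
  rw [mul_one, h1] at h2
  exact h2.symm

/-- Step 1: make one pivot. -/
lemma step1 (hE : ∀ i j h c, E i j h c ∈ H) (m : Fin n) (N : G n) (hN : Std m.val N) :
    ∃ h ∈ H, Std m.val (h * N) ∧ ∃ i : Fin n, m ≤ i ∧ ∀ l, m ≤ l → l ≠ i → (h * N).val l m = 0 := by
  classical
  let f : G n → ℕ := fun h => ∑ l ∈ Finset.Ici m, ((h * N).val l m).natAbs
  let S : Set (G n) := {h | h ∈ H ∧ Std m.val (h * N)}
  have hS : S.Nonempty := ⟨1, H.one_mem, by simpa using hN⟩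
  obtain ⟨h, ⟨hH, hs⟩, hmin⟩ : ∃ h ∈ S, ∀ h' ∈ S, f h ≤ f h' := by
    have := (measure f).wf
    refine ⟨this.min S hS, this.min_mem S hS, fun h' hh' => ?_⟩
    exact not_lt.mp (this.not_lt_min S hh')
  refine ⟨h, hH, hs, ?_⟩
  have red : ∀ i l : Fin n, m ≤ i → m ≤ l → i ≠ l → (h * N).val i m ≠ 0 →
      ((h * N).val i m).natAbs ≤ ((h * N).val l m).natAbs → False := by
    intro i l hi hl hil h0 hle
    have : ∃ c : ℤ, ((h * N).val l m + c * (h * N).val i m).natAbs < ((h * N).val l m).natAbs := by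
      by_cases hsg : 0 ≤ (h * N).val i m * (h * N).val l m
      · refine ⟨-1, ?_⟩
        generalize (h * N).val i m = x at *
        generalize (h * N).val l m = y at *
        rcases lt_trichotomy x 0 with hx | hx | hx
        · have : y ≤ 0 := by nlinarith
          omega
        · omega
        · have : 0 ≤ y := by nlinarith
          omega
      · refine ⟨1, ?_⟩
        generalize (h * N).val i m = x at *
        generalize (h * N).val l m = y at *
        rcases lt_trichotomy x 0 with hx | hx | hx
        · have : 0 ≤ y := by nlinarith
          omega
        · omega
        · have : y ≤ 0 := by nlinarith
          omega
    obtain ⟨c, hc⟩ := this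
    have hm := hmin (E l i hil.symm c * h) ⟨H.mul_mem (hE _ _ _ _) hH, by
      rw [mul_assoc]; exact hs.E_mul _ _ _ hi _⟩
    apply absurd hm
    rw [not_le]
    refine Finset.sum_lt_sum (fun a _ => ?_) ⟨l, by simpa using hl, ?_⟩
    · by_cases ha : a = l
      · subst ha; rw [mul_assoc, E_mul_same]; exact hc.le
      · rw [mul_assoc, E_mul_ne _ _ _ _ _ _ _ ha]
    · rw [mul_assoc, E_mul_same]; exact hc
  by_cases hz : ∃ i, m ≤ i ∧ (h * N).val i m ≠ 0
  · obtain ⟨i, hi, h0⟩ := hz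
    refine ⟨i, hi, fun l hl hli => ?_⟩
    by_contra hne
    rcases le_total ((h * N).val i m).natAbs ((h * N).val l m).natAbs with hle | hle
    · exact red i l hi hl hli.symm h0 hle
    · exact red l i hl hi hli hne hle
  · push Not at hz
    exact ⟨m, le_rfl, fun l hl _ => hz l hl⟩

lemma pivot_unit (m : Fin n) (N : G n) (hN : Std m.val N) (i : Fin n)
    (hz : ∀ l, m ≤ l → l ≠ i → N.val l m = 0) : N.val i m = 1 ∨ N.val i m = -1 := by
  have h1 : (N⁻¹).val * N.val = 1 := by rw [← Units.val_mul]; simp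
  have h2 : ((N⁻¹).val * N.val) m m = 1 := by rw [h1]; simp
  rw [mul_apply, Finset.sum_eq_single i] at h2
  · rw [mul_comm] at h2
    exact Int.eq_one_or_neg_one_of_mul_eq_one h2
  · intro l _ hl
    by_cases hml : m ≤ l
    · rw [hz l hml hl, mul_zero]
    · have hlm : l < m := not_le.mp hml
      rw [hN.inv m l hlm, one_apply_ne hlm.ne', zero_mul]
  · simp

/-- Step 2: put a one on the diagonal. -/
lemma step2 (hE : ∀ i j h c, E i j h c ∈ H) (hD : ∀ i, D i ∈ H) (m : Fin n) (N : G n)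
    (hN : Std m.val N) :
    ∃ h ∈ H, Std m.val (h * N) ∧ (h * N).val m m = 1 := by
  obtain ⟨h, hH, hs, i, hmi, hz⟩ := step1 hE m N hN
  have hu := pivot_unit m _ hs i hz
  by_cases him : i = m
  · subst him
    rcases hu with hu | hu
    · exact ⟨h, hH, hs, hu⟩
    · refine ⟨D i * h, H.mul_mem (hD i) hH, ?_, ?_⟩
      · intro a b hb
        rw [mul_assoc, D_mul, hs a b hb]
        by_cases ha : a = i
        · subst ha
          rw [one_apply_ne]
          · simp
          · rintro rfl; omega
        · simp [ha]
      · rw [mul_assoc, D_mul, hu]; simp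
  · have h0 := hz m le_rfl (Ne.symm him)
    refine ⟨E m i (Ne.symm him) ((h * N).val i m) * h, H.mul_mem (hE _ _ _ _) hH, ?_, ?_⟩
    · rw [mul_assoc]; exact hs.E_mul _ _ _ hmi _
    · rw [mul_assoc, E_mul_same, h0]
      rcases hu with hu | hu <;> rw [hu] <;> norm_num

/-- Step 3: clear the column. -/
lemma step3 (hE : ∀ i j h c, E i j h c ∈ H) (hD : ∀ i, D i ∈ H) (m : Fin n) (N : G n)
    (hN : Std m.val N) :
    ∃ h ∈ H, Std (m.val + 1) (h * N) := by
  classical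
  obtain ⟨h, hH, hs, h1⟩ := step2 hE hD m N hN
  have key : ∀ s : Finset (Fin n), m ∉ s → ∃ h ∈ H, Std m.val (h * N) ∧ (h * N).val m m = 1 ∧
      ∀ l ∈ s, (h * N).val l m = 0 := by
    intro s
    induction s using Finset.induction_on with
    | empty => intro _; exact ⟨h, hH, hs, h1, by simp⟩
    | insert a s ha ih =>
      intro hm
      simp only [Finset.mem_insert, not_or] at hm
      obtain ⟨h, hH, hs, h1, hz⟩ := ih hm.2
      refine ⟨E a m (Ne.symm hm.1) (-(h * N).val a m) * h, H.mul_mem (hE _ _ _ _) hH, ?_, ?_, ?_⟩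
      · rw [mul_assoc]; exact hs.E_mul _ _ _ le_rfl _
      · rw [mul_assoc, E_mul_ne _ _ _ _ _ _ _ hm.1, h1]
      · intro l hl
        by_cases hla : l = a
        · subst hla; rw [mul_assoc, E_mul_same, h1]; ring
        · rw [mul_assoc, E_mul_ne _ _ _ _ _ _ _ hla]
          exact hz l (Finset.mem_of_mem_insert_of_ne hl hla)
  obtain ⟨h, hH, hs, h1, hz⟩ := key (Finset.univ.erase m) (by simp)
  refine ⟨h, hH, fun i j hj => ?_⟩
  by_cases hjm : j = m
  · subst hjm
    by_cases hij : i = j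
    · subst hij; rw [h1]; simp
    · rw [hz i (by simpa using hij), one_apply_ne hij]
  · exact hs i j (by have : j.val ≠ m.val := fun h => hjm (Fin.ext h)
                     omega)

lemma gen_top (hE : ∀ i j h c, E i j h c ∈ H) (hD : ∀ i, D i ∈ H) : H = ⊤ := by
  rw [eq_top_iff]
  intro N _
  have key : ∀ m, m ≤ n → ∃ h ∈ H, Std m (h * N) := by
    intro m
    induction m with
    | zero => intro _; exact ⟨1, H.one_mem, fun i j hj => absurd hj (Nat.not_lt_zero _)⟩
    | succ m ih =>
      intro hm
      obtain ⟨h, hH, hs⟩ := ih (by omega)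
      obtain ⟨h', hH', hs'⟩ := step3 hE hD ⟨m, hm⟩ (h * N) hs
      exact ⟨h' * h, H.mul_mem hH' hH, by rw [mul_assoc]; exact hs'⟩
  obtain ⟨h, hH, hs⟩ := key n le_rfl
  have : h * N = 1 := by
    apply Units.ext; ext i j; exact hs i j j.2
  rw [eq_inv_of_mul_eq_one_right this]
  exact H.inv_mem hH

end gen

/-! ### Permutation matrices -/

/-- The permutation matrix homomorphism -/
def P0 (n : ℕ) : Equiv.Perm (Fin n) →* Matrix (Fin n) (Fin n) ℤ where
  toFun π := Matrix.of fun i j => if i = π j then 1 else 0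
  map_one' := by ext i j; by_cases h : i = j <;> [subst h; skip] <;> simp [*]
  map_mul' π ρ := by
    ext i j
    by_cases h : i = π (ρ j) <;> simp [mul_apply, h]

def P (n : ℕ) : Equiv.Perm (Fin n) →* G n := (P0 n).toHomUnits

lemma P_val {n : ℕ} (π : Equiv.Perm (Fin n)) (i j : Fin n) :
    (P n π).val i j = if i = π j then 1 else 0 := rfl

lemma P_inj (n : ℕ) : Function.Injective (P n) := by
  intro π ρ h
  ext j
  have := congrArg (fun g : G n => g.val (π j) j) h
  simp only [P_val] at this
  have h2 : π j = ρ j := by simpa using this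
  rw [h2]

lemma P_conj_E {n : ℕ} (π : Equiv.Perm (Fin n)) (i j : Fin n) (h : i ≠ j) (c : ℤ) :
    P n π * E i j h c = E (π i) (π j) (π.injective.ne h) c * P n π := by
  apply Units.ext
  simp only [Units.val_mul, E_val, mul_add, add_mul, one_mul, mul_one]
  congr 1
  ext a b
  rw [mul_apply, mul_apply]
  simp only [P_val, single_apply]
  rw [Finset.sum_eq_single i, Finset.sum_eq_single (π j)]
  · by_cases h1 : a = π i <;> by_cases h2 : b = j <;> simp [h1, h2, eq_comm]
  · intro x _ hx; simp [Ne.symm hx]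
  · simp
  · intro x _ hx; simp [Ne.symm hx]
  · simp

lemma P_conj_D {n : ℕ} (π : Equiv.Perm (Fin n)) (i : Fin n) :
    P n π * D i = D (π i) * P n π := by
  apply Units.ext
  ext a b
  rw [D_mul]
  show ((P n π).val * (diagonal _ : Matrix (Fin n) (Fin n) ℤ)) a b = _
  rw [mul_diagonal, P_val]
  by_cases h1 : a = π b
  · subst h1; simp
  · simp [h1]

/-! ### Block rotations -/

def F (k n s j i : ℕ) : ℕ :=
  if s ≤ i ∧ s + (i - s) / k * k + k ≤ n then s + (i - s) / k * k + ((i - s) % k + j) % k else i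

lemma F_in {k n s : ℕ} (j q r : ℕ) (hr : r < k) (h : s + q * k + k ≤ n) :
    F k n s j (s + q * k + r) = s + q * k + (r + j) % k := by
  have e : s + q * k + r - s = r + k * q := by rw [mul_comm k q]; omega
  have e1 : (s + q * k + r - s) / k = q := by
    rw [e, Nat.add_mul_div_left _ _ (by omega), Nat.div_eq_of_lt hr, zero_add]
  have e2 : (s + q * k + r - s) % k = r := by
    rw [e, Nat.add_mul_mod_self_left, Nat.mod_eq_of_lt hr]
  unfold F
  rw [e1, e2, if_pos ⟨by omega, h⟩]

lemma F_cases {k : ℕ} (n s i : ℕ) (hk : 0 < k) :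
    (∃ q r, r < k ∧ s + q * k + k ≤ n ∧ i = s + q * k + r) ∨ ∀ j, F k n s j i = i := by
  by_cases h : s ≤ i ∧ s + (i - s) / k * k + k ≤ n
  · left
    refine ⟨(i - s) / k, (i - s) % k, Nat.mod_lt _ hk, h.2, ?_⟩
    have := Nat.div_add_mod' (i - s) k
    omega
  · right; intro j; unfold F; rw [if_neg h]

lemma F_lt {k n s : ℕ} (hk : 0 < k) (j i : ℕ) (hi : i < n) : F k n s j i < n := by
  rcases F_cases n s i hk with ⟨q, r, hr, h, rfl⟩ | h
  · rw [F_in _ _ _ hr h]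
    have := Nat.mod_lt (r + j) hk
    omega
  · rw [h]; exact hi

lemma F_add {k n s : ℕ} (hk : 0 < k) (a b i : ℕ) : F k n s a (F k n s b i) = F k n s (a + b) i := by
  rcases F_cases n s i hk with ⟨q, r, hr, h, rfl⟩ | h
  · rw [F_in _ _ _ hr h, F_in _ _ _ (Nat.mod_lt _ hk) h, F_in _ _ _ hr h, Nat.mod_add_mod]
    congr 2; ring
  · rw [h, h, h]

lemma F_k {k n s : ℕ} (hk : 0 < k) (i : ℕ) : F k n s k i = i := by
  rcases F_cases n s i hk with ⟨q, r, hr, h, rfl⟩ | h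
  · rw [F_in _ _ _ hr h, Nat.add_mod_right, Nat.mod_eq_of_lt hr]
  · rw [h]

/-- The block rotation as a permutation. -/
def B (k n s : ℕ) (hk : 0 < k) : Equiv.Perm (Fin n) where
  toFun i := ⟨F k n s 1 i, F_lt hk _ _ i.2⟩
  invFun i := ⟨F k n s (k - 1) i, F_lt hk _ _ i.2⟩
  left_inv i := by
    ext; simp only; rw [F_add hk, Nat.sub_add_cancel hk, F_k hk]
  right_inv i := by
    ext; simp only; rw [F_add hk, Nat.add_sub_cancel' hk, F_k hk]

lemma B_pow {k n s : ℕ} (hk : 0 < k) (j : ℕ) (i : Fin n) (hj : 0 < j) :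
    ((B k n s hk ^ j) i).val = F k n s j i := by
  induction j, hj using Nat.le_induction with
  | base => simp [B]
  | succ j hj ih =>
    rw [pow_succ', Equiv.Perm.mul_apply]
    show F k n s 1 _ = _
    rw [ih, F_add hk, add_comm]

lemma B_orderOf {k n s : ℕ} (hk : 0 < k) (hs : s + k ≤ n) : orderOf (B k n s hk) = k := by
  rw [orderOf_eq_iff hk]
  constructor
  · ext i
    rw [B_pow hk _ _ hk, F_k hk]; rfl
  · intro m hm hm0 h
    have := B_pow (s := s) (n := n) hk m ⟨s, by omega⟩ hm0
    have h2 := F_in (k := k) (n := n) (s := s) m 0 0 hk (by omega)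
    simp only [zero_mul, add_zero, zero_add] at h2
    rw [h, h2, Nat.mod_eq_of_lt hm] at this
    simp at this
    omega

lemma B_succ {k n s : ℕ} (hk : 0 < k) (i : Fin n) (j : Fin n) (hj : j.val = i.val + 1)
    (hs : s ≤ i.val) (hr : (i.val - s) % k + 1 < k) (hn : i.val + k ≤ n + (i.val - s) % k) :
    B k n s hk i = j := by
  ext
  rw [hj]
  show F k n s 1 i = _
  have h := Nat.div_add_mod' (i.val - s) k
  have e : i.val = s + (i.val - s) / k * k + (i.val - s) % k := by omega
  have := F_in (k := k) (n := n) (s := s) 1 ((i.val - s) / k) ((i.val - s) % k) (by omega) (by omega)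
  rw [← e, Nat.mod_eq_of_lt hr] at this
  rw [this]; omega


lemma B_fix {k n s : ℕ} (hk : 0 < k) (i : Fin n) (hi : i.val < s) : B k n s hk i = i := by
  ext
  show F k n s 1 i = _
  unfold F
  rw [if_neg (by omega)]

lemma B_last {k n : ℕ} (hk : 0 < k) (hn : k ≤ n) (i j : Fin n) (hi : i.val = k - 1)
    (hj : j.val = 0) : B k n 0 hk i = j := by
  ext
  show F k n 0 1 i = _
  have := F_in (k := k) (n := n) (s := 0) 1 0 (k - 1) (by omega) (by omega)
  rw [Nat.sub_add_cancel hk, Nat.mod_self] at this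
  simp only [zero_mul, zero_add] at this
  rw [hi, hj, this]

/-! ### The relation given by transvections in a subgroup -/

section rel
variable {n : ℕ} {H : Subgroup (G n)}

/-- The transvection with entry at `(i, j)` lies in `H`. -/
def R (H : Subgroup (G n)) (i j : Fin n) : Prop := i = j ∨ ∃ h : i ≠ j, E i j h 1 ∈ H

lemma R.trans {i j l : Fin n} (h1 : R H i j) (h2 : R H j l) : R H i l := by
  rcases h1 with rfl | ⟨h1, m1⟩
  · exact h2
  rcases h2 with rfl | ⟨h2, m2⟩
  · exact Or.inr ⟨h1, m1⟩
  by_cases h3 : i = l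
  · exact Or.inl h3
  refine Or.inr ⟨h3, ?_⟩
  have e : E i l h3 1 = E i j h1 1 * E j l h2 1 * (E i j h1 1)⁻¹ * (E j l h2 1)⁻¹ := by
    rw [E_comm h1 h2 h3]; group
  rw [e]
  exact H.mul_mem (H.mul_mem (H.mul_mem m1 m2) (H.inv_mem m1)) (H.inv_mem m2)

lemma R.map {i j i' j' : Fin n} (h : R H i j) {π : Equiv.Perm (Fin n)} (hπ : P n π ∈ H)
    (hi : π i = i') (hj : π j = j') : R H i' j' := by
  subst hi hj
  rcases h with rfl | ⟨h, m⟩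
  · exact Or.inl rfl
  refine Or.inr ⟨π.injective.ne h, ?_⟩
  rw [← mul_inv_eq_iff_eq_mul.mpr (P_conj_E π i j h 1)]
  exact H.mul_mem (H.mul_mem hπ m) (H.inv_mem hπ)

lemma conj_E' {π : Equiv.Perm (Fin n)} {i j i' j' : Fin n} (h : i ≠ j) (h' : i' ≠ j')
    (hi : π i = i') (hj : π j = j') (c : ℤ) :
    P n π * E i j h c = E i' j' h' c * P n π := by
  subst hi hj
  exact P_conj_E π i j h c

lemma D_map {i i' : Fin n} (h : D i ∈ H) {π : Equiv.Perm (Fin n)} (hπ : P n π ∈ H)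
    (hi : π i = i') : D i' ∈ H := by
  subst hi
  rw [← mul_inv_eq_iff_eq_mul.mpr (P_conj_D π i)]
  exact H.mul_mem (H.mul_mem hπ h) (H.inv_mem hπ)

lemma rel_top (k : ℕ) (hk : 5 ≤ k) (hkn : k + 3 ≤ n)
    (h0 : P n (B k n 0 (by omega)) ∈ H) (h2 : P n (B k n 2 (by omega)) ∈ H)
    (h3 : P n (B k n (n - k) (by omega)) ∈ H)
    (hR : R H ⟨1, by omega⟩ ⟨0, by omega⟩) (hD : D ⟨0, by omega⟩ ∈ H) : H = ⊤ := by
  have hk0 : 0 < k := by omega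
  have adj : ∀ i (hi : i + 2 < n), ∃ π : Equiv.Perm (Fin n), P n π ∈ H ∧
      π ⟨i, by omega⟩ = ⟨i + 1, by omega⟩ ∧ π ⟨i + 1, by omega⟩ = ⟨i + 2, hi⟩ := by
    intro i hi
    have modsucc : ∀ x, x % k + 1 < k → (x + 1) % k = x % k + 1 := by
      intro x hx
      rw [Nat.add_mod, Nat.mod_eq_of_lt (show 1 < k by omega), Nat.mod_eq_of_lt hx]
    by_cases hc : n - k ≤ i
    · have e1 : (i - (n - k)) % k = i - (n - k) := Nat.mod_eq_of_lt (by omega)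
      have e2 : (i + 1 - (n - k)) % k = i + 1 - (n - k) := Nat.mod_eq_of_lt (by omega)
      refine ⟨_, h3, B_succ hk0 _ _ rfl hc ?_ ?_, B_succ hk0 _ _ rfl ?_ ?_ ?_⟩ <;>
        simp only [e1, e2] <;> omega
    · by_cases hm : i % k + 2 < k
      · have e := modsucc i (by omega)
        refine ⟨_, h0, B_succ hk0 _ _ rfl (Nat.zero_le _) ?_ ?_,
          B_succ hk0 _ _ rfl (Nat.zero_le _) ?_ ?_⟩ <;> simp only [Nat.sub_zero, e] <;> omega
      · have hlt := Nat.mod_lt i hk0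
        have hle := Nat.mod_le i k
        have e0 : (i - 2) % k = i % k - 2 := by
          have hd := Nat.div_add_mod i k
          have : i - 2 = (i % k - 2) + k * (i / k) := by omega
          rw [this, Nat.add_mul_mod_self_left, Nat.mod_eq_of_lt (by omega)]
        have e1 := modsucc (i - 2) (by omega)
        have e2 : i - 2 + 1 = i + 1 - 2 := by omega
        rw [e2] at e1
        refine ⟨_, h2, B_succ hk0 _ _ rfl ?_ ?_ ?_, B_succ hk0 _ _ rfl ?_ ?_ ?_⟩ <;>
          simp only [e1, e0] <;> omega
  have down1 : ∀ i (hi : i + 1 < n), R H ⟨i + 1, hi⟩ ⟨i, by omega⟩ := by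
    intro i
    induction i with
    | zero => intro _; exact hR
    | succ i ih =>
      intro hi
      obtain ⟨π, hπ, a, b⟩ := adj i hi
      exact (ih (by omega)).map hπ b a
  have down : ∀ j (hj : j < n) i (hi : i ≤ j), R H ⟨j, hj⟩ ⟨i, by omega⟩ := by
    intro j
    induction j with
    | zero => intro hj i hi; left; ext; simp; omega
    | succ j ih =>
      intro hj i hi
      by_cases hij : i = j + 1
      · left; ext; simp; omega
      · exact (down1 j hj).trans (ih (by omega) i (by omega))
  have hB01 : B k n 0 hk0 ⟨0, by omega⟩ = ⟨1, by omega⟩ :=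
    B_succ hk0 _ _ rfl (Nat.zero_le _) (by simp; omega) (by simp; omega)
  have up0 : R H ⟨0, by omega⟩ ⟨1, by omega⟩ := by
    have a := down (k - 1) (by omega) (k - 2) (by omega)
    have b : R H ⟨0, by omega⟩ ⟨k - 1, by omega⟩ := by
      refine a.map h0 (B_last hk0 (by omega) _ _ rfl rfl) (B_succ hk0 _ _ ?_ (Nat.zero_le _) ?_ ?_)
      · simp only; omega
      all_goals simp only [Nat.sub_zero, Nat.mod_eq_of_lt (show k - 2 < k by omega)]; omega
    exact b.trans (down (k - 1) (by omega) 1 (by omega))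
  have up1 : ∀ i (hi : i + 1 < n), R H ⟨i, by omega⟩ ⟨i + 1, hi⟩ := by
    intro i
    induction i with
    | zero => intro _; exact up0
    | succ i ih =>
      intro hi
      obtain ⟨π, hπ, a, b⟩ := adj i hi
      exact (ih (by omega)).map hπ a b
  have up : ∀ j (hj : j < n) i (hi : i ≤ j), R H ⟨i, by omega⟩ ⟨j, hj⟩ := by
    intro j
    induction j with
    | zero => intro hj i hi; left; ext; simp; omega
    | succ j ih =>
      intro hj i hi
      by_cases hij : i = j + 1
      · left; ext; simp; omega
      · exact (ih (by omega) i (by omega)).trans (up1 j hj)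
  have all : ∀ i j : Fin n, R H i j := by
    intro i j
    rcases le_total i.val j.val with h | h
    · exact up j.val j.2 i.val h
    · exact down i.val i.2 j.val h
  have allD : ∀ i (hi : i < n), D ⟨i, hi⟩ ∈ H := by
    intro i
    induction i with
    | zero => intro _; exact hD
    | succ i ih =>
      intro hi
      cases i with
      | zero => exact D_map hD h0 hB01
      | succ i =>
        obtain ⟨π, hπ, a, b⟩ := adj i hi
        exact D_map (ih (by omega)) hπ b
  apply gen_top
  · intro i j h c
    rcases all i j with h' | ⟨_, h'⟩
    · exact absurd h' h
    · rw [← E_zpow]; exact H.zpow_mem h' c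
  · intro i; exact allD i.val i.2

end rel

lemma orderOf_conj' {Γ : Type*} [Group Γ] (g x : Γ) : orderOf (g * x * g⁻¹) = orderOf x :=
  (MulAut.conj g).orderOf_eq x

lemma orderOf_D {n : ℕ} (i : Fin n) : orderOf (D i : G n) = 2 := by
  apply orderOf_eq_prime
  · rw [pow_two]
    exact mul_inv_cancel (D i : G n)
  · intro h
    have := congrArg (fun g : G n => g.val i i) h
    simp [D] at this

end GLGen

theorem GL_n_Z_generated_by_eight_order_k_and_one_involution
    (k n : ℕ) (hk : 5 ≤ k) (hn : 2 * (k - 1) ≤ n) :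
    ∃ M₁ M₂ M₃ M₄ M₅ M₆ M₇ M₈ M₉ : Matrix.GeneralLinearGroup (Fin n) ℤ,
      orderOf M₁ = k ∧ orderOf M₂ = k ∧ orderOf M₃ = k ∧ orderOf M₄ = k ∧
      orderOf M₅ = k ∧ orderOf M₆ = k ∧ orderOf M₇ = k ∧ orderOf M₈ = k ∧
      orderOf M₉ = 2 ∧
      Subgroup.closure {M₁, M₂, M₃, M₄, M₅, M₆, M₇, M₈, M₉} = ⊤ := by
  classical
  have hkn : k + 3 ≤ n := by omega
  have hk0 : 0 < k := by omega
  have ordP : ∀ s, s + k ≤ n → orderOf (GLGen.P n (GLGen.B k n s hk0)) = k := fun s hs => by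
    rw [orderOf_injective _ (GLGen.P_inj n), GLGen.B_orderOf hk0 hs]
  obtain ⟨p, hp⟩ : ∃ p : Fin n, p = ⟨0, by omega⟩ := ⟨_, rfl⟩
  obtain ⟨q, hq⟩ : ∃ p : Fin n, p = ⟨1, by omega⟩ := ⟨_, rfl⟩
  obtain ⟨a, ha⟩ : ∃ p : Fin n, p = ⟨n - k, by omega⟩ := ⟨_, rfl⟩
  obtain ⟨b, hb⟩ : ∃ p : Fin n, p = ⟨n - k + 1, by omega⟩ := ⟨_, rfl⟩
  obtain ⟨c, hc⟩ : ∃ p : Fin n, p = ⟨n - k + 2, by omega⟩ := ⟨_, rfl⟩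
  have hqp : q ≠ p := by simp [hp, hq]
  have hqb : q ≠ b := by rw [hq, hb, Ne, Fin.mk.injEq]; omega
  have hqc : q ≠ c := by rw [hq, hc, Ne, Fin.mk.injEq]; omega
  have hap : a ≠ p := by rw [ha, hp, Ne, Fin.mk.injEq]; omega
  have hbp : b ≠ p := by rw [hb, hp, Ne, Fin.mk.injEq]; omega
  have hab : a ≠ b := by rw [ha, hb, Ne, Fin.mk.injEq]; omega
  have hac : a ≠ c := by rw [ha, hc, Ne, Fin.mk.injEq]; omega
  have hbc : b ≠ c := by rw [hb, hc, Ne, Fin.mk.injEq]; omega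
  have fp : GLGen.B k n (n - k) hk0 p = p := GLGen.B_fix hk0 _ (by rw [hp]; simp only; omega)
  have fq : GLGen.B k n (n - k) hk0 q = q := GLGen.B_fix hk0 _ (by rw [hq]; simp only; omega)
  have fa : GLGen.B k n (n - k) hk0 a = b := by
    rw [ha, hb]
    apply GLGen.B_succ hk0 _ _ rfl <;> simp only [Nat.sub_self, Nat.zero_mod] <;> omega
  have fb : GLGen.B k n (n - k) hk0 b = c := by
    have e : (n - k + 1 - (n - k)) % k = 1 := by
      rw [Nat.add_sub_cancel_left, Nat.mod_eq_of_lt (by omega)]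
    rw [hb, hc]
    apply GLGen.B_succ hk0 _ _ rfl <;> simp only [e] <;> omega
  set ρ := GLGen.P n (GLGen.B k n (n - k) hk0) with hρ
  refine ⟨GLGen.P n (GLGen.B k n 0 hk0), GLGen.P n (GLGen.B k n 2 hk0), ρ,
    GLGen.E a p hap 1 * ρ * (GLGen.E a p hap 1)⁻¹, GLGen.E q b hqb 1 * ρ * (GLGen.E q b hqb 1)⁻¹,
    ρ, ρ, ρ, GLGen.D p, ordP _ (by omega), ordP _ (by omega), ordP _ (by omega),
    ?_, ?_, ordP _ (by omega), ordP _ (by omega), ordP _ (by omega), GLGen.orderOf_D p, ?_⟩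
  · rw [GLGen.orderOf_conj']; exact ordP _ (by omega)
  · rw [GLGen.orderOf_conj']; exact ordP _ (by omega)
  set H := Subgroup.closure ({GLGen.P n (GLGen.B k n 0 hk0), GLGen.P n (GLGen.B k n 2 hk0), ρ,
    GLGen.E a p hap 1 * ρ * (GLGen.E a p hap 1)⁻¹, GLGen.E q b hqb 1 * ρ * (GLGen.E q b hqb 1)⁻¹,
    ρ, ρ, ρ, GLGen.D p} : Set (Matrix.GeneralLinearGroup (Fin n) ℤ)) with hH
  have m1 : GLGen.P n (GLGen.B k n 0 hk0) ∈ H := Subgroup.subset_closure (by simp)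
  have m2 : GLGen.P n (GLGen.B k n 2 hk0) ∈ H := Subgroup.subset_closure (by simp)
  have m3 : ρ ∈ H := Subgroup.subset_closure (by simp)
  have m4 : GLGen.E a p hap 1 * ρ * (GLGen.E a p hap 1)⁻¹ ∈ H := Subgroup.subset_closure (by simp)
  have m5 : GLGen.E q b hqb 1 * ρ * (GLGen.E q b hqb 1)⁻¹ ∈ H := Subgroup.subset_closure (by simp)
  have m9 : GLGen.D p ∈ H := Subgroup.subset_closure (by simp)
  have x : GLGen.E a p hap 1 * GLGen.E b p hbp (-1) ∈ H := by
    have := H.mul_mem m4 (H.inv_mem m3)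
    rw [GLGen.E_inv, mul_assoc (GLGen.E a p hap 1), GLGen.conj_E' hap hbp fa fp, ← hρ] at this
    simpa [mul_assoc] using this
  have z : GLGen.E q b hqb 1 * GLGen.E q c hqc (-1) ∈ H := by
    have := H.mul_mem m5 (H.inv_mem m3)
    rw [GLGen.E_inv, mul_assoc (GLGen.E q b hqb 1), GLGen.conj_E' hqb hqc fq fb, ← hρ] at this
    simpa [mul_assoc] using this
  have y : GLGen.E q p hqp (-1) ∈ H := by
    have e := GLGen.E_comm2 hqp hqb hqc hap hbp hab hac hbc
    rw [← mul_inv_eq_iff_eq_mul] at e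
    rw [← e]
    exact H.mul_mem (H.mul_mem z x) (H.inv_mem (H.mul_mem x z))
  have y' := H.inv_mem y
  rw [GLGen.E_inv, neg_neg] at y'
  subst hp hq
  exact GLGen.rel_top k hk hkn m1 m2 m3 (Or.inr ⟨hqp, y'⟩) m9
end

section
/- Let k ≥ 2 and let n be a positive integer such that either n = a·k + b·(k − 1) for some nonnegative integers a, b, or n = a·k + 1 for some positive integer a. Then the integral symplectic group Sp(2n, ℤ) contains an element of order exactly k. -/
/-- Reduced permutation matrix: the action of a permutation of `Option (Fin n)` on
`ℤ`-valued functions modulo constants. -/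
def redMat {n : ℕ} (s : Equiv.Perm (Option (Fin n))) : Matrix (Fin n) (Fin n) ℤ :=
  fun i j => (if s.symm (some i) = some j then 1 else 0) - (if s.symm none = some j then 1 else 0)

lemma redMat_one {n : ℕ} : redMat (1 : Equiv.Perm (Option (Fin n))) = 1 := by
  ext i j
  have h1 : (1 : Equiv.Perm (Option (Fin n))).symm = 1 := rfl
  simp [redMat, h1, Matrix.one_apply]

lemma redMat_sum {n : ℕ} (t : Equiv.Perm (Option (Fin n))) (y : Option (Fin n)) (l : Fin n) :
    ∑ j, (if y = some j then (1 : ℤ) else 0) * redMat t j l =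
      (if t.symm y = some l then 1 else 0) - (if t.symm none = some l then 1 else 0) := by
  cases y with
  | none => simp
  | some y => simp [redMat]

lemma redMat_mul {n : ℕ} (s t : Equiv.Perm (Option (Fin n))) :
    redMat (s * t) = redMat s * redMat t := by
  ext i l
  have h1 : ∀ x, (s * t).symm x = t.symm (s.symm x) := fun _ => rfl
  have h2 : ∀ j, redMat s i j = (if s.symm (some i) = some j then 1 else 0) -
    (if s.symm none = some j then 1 else 0) := fun _ => rfl
  rw [Matrix.mul_apply]
  simp only [h2, sub_mul, Finset.sum_sub_distrib, redMat_sum]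
  simp only [redMat, h1]
  ring

lemma redMat_inj {n : ℕ} (s : Equiv.Perm (Option (Fin n))) (h : redMat s = 1) : s = 1 := by
  have h1 : ∀ j, s.symm (some j) = some j := by
    intro j
    have := congrFun (congrFun h j) j
    simp only [redMat, Matrix.one_apply_eq] at this
    by_contra hc
    rw [if_neg hc] at this
    split_ifs at this <;> omega
  have h2 : ∀ j, s (some j) = some j := fun j => by
    conv_lhs => rw [← h1 j]
    simp
  ext1 x
  cases x with
  | some j => simpa using h2 j
  | none =>
    rcases hx : s none with _ | j
    · rfl
    · rw [← h2 j] at hx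
      exact absurd (s.injective hx) (by simp)

/-- The resulting homomorphism to the symplectic group. -/
def sympHom (n : ℕ) : Equiv.Perm (Option (Fin n)) →* Matrix.symplecticGroup (Fin n) ℤ where
  toFun s := ⟨Matrix.fromBlocks (redMat s) 0 0 (redMat s⁻¹).transpose, by
    have h1 : redMat s * redMat s⁻¹ = 1 := by rw [← redMat_mul, mul_inv_cancel, redMat_one]
    have h2 := congrArg Matrix.transpose h1
    rw [Matrix.transpose_mul, Matrix.transpose_one] at h2
    rw [SymplecticGroup.mem_iff, Matrix.J, Matrix.fromBlocks_transpose,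
      Matrix.fromBlocks_multiply, Matrix.fromBlocks_multiply]
    simp [h1, h2]⟩
  map_one' := by
    apply Subtype.ext
    simp [redMat_one]
  map_mul' s t := by
    apply Subtype.ext
    simp [redMat_mul, Matrix.fromBlocks_multiply]

lemma sympHom_injective (n : ℕ) : Function.Injective (sympHom n) := by
  rw [injective_iff_map_eq_one]
  intro s hs
  apply redMat_inj
  have h := congrArg (fun M => Matrix.toBlocks₁₁ (Subtype.val M)) hs
  simpa [sympHom, ← Matrix.fromBlocks_one] using h

/-- For `k ≥ 2` and a positive integer `n` which can be written either as
`a·k + b·(k - 1)` with `a, b` nonnegative integers or as `a·k + 1` with `a` a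
positive integer, the integral symplectic group `Sp(2n, ℤ)` contains an element
of order exactly `k`. -/
theorem symplectic_group_has_element_of_order_k
    (k : ℕ) (n : ℕ) (hk : 2 ≤ k) (hn : 1 ≤ n)
    (h : (∃ a b : ℤ, 0 ≤ a ∧ 0 ≤ b ∧ (n : ℤ) = a * k + b * (k - 1)) ∨
      (∃ a : ℤ, 1 ≤ a ∧ (n : ℤ) = a * k + 1)) :
    ∃ M : Matrix.symplecticGroup (Fin n) ℤ, orderOf M = k := by
  have hkn : k ≤ n + 1 := by
    have hk' : (2 : ℤ) ≤ k := by exact_mod_cast hk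
    have hn' : (1 : ℤ) ≤ n := by exact_mod_cast hn
    zify
    rcases h with ⟨a, b, ha, hb, h⟩ | ⟨a, ha, h⟩
    · rcases ha.eq_or_lt with rfl | ha
      · rcases hb.eq_or_lt with rfl | hb
        · simp at h; omega
        · nlinarith
      · nlinarith [mul_nonneg hb (by linarith : (0 : ℤ) ≤ k - 1)]
    · nlinarith
  obtain ⟨s, hs⟩ := (Equiv.Perm.exists_with_cycleType_iff (Option (Fin n)) (m := {k})).2
    ⟨by simpa using hkn, by simpa using hk⟩
  refine ⟨sympHom n s, ?_⟩
  rw [orderOf_injective _ (sympHom_injective n), ← Equiv.Perm.lcm_cycleType, hs]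
  simp
end

section
/- Let k ≥ 5 and let n be an integer with n ≥ (k − 1)(k − 3). Then the integral symplectic group Sp(2n, ℤ) contains an element of order exactly k. -/
open Matrix in
/-- The block diagonal embedding of the symmetric group into the symplectic group. -/
def permToSymplectic (n : ℕ) : Equiv.Perm (Fin n) →* Matrix.symplecticGroup (Fin n) ℤ where
  toFun σ := ⟨fromBlocks ((σ⁻¹).permMatrix ℤ) 0 0 ((σ⁻¹).permMatrix ℤ), by
    have h : (σ⁻¹).permMatrix ℤ * (σ.permMatrix ℤ) = 1 := by
      rw [← Matrix.permMatrix_mul, mul_inv_cancel, Matrix.permMatrix_one]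
    change _ * J (Fin n) ℤ * _ᵀ = J (Fin n) ℤ
    simp only [J, fromBlocks_transpose, fromBlocks_multiply, transpose_permMatrix, inv_inv]
    simp [h]⟩
  map_one' := by
    apply Subtype.ext
    simp
  map_mul' σ τ := by
    apply Subtype.ext
    simp [fromBlocks_multiply, Matrix.permMatrix_mul]

theorem permToSymplectic_injective (n : ℕ) : Function.Injective (permToSymplectic n) := by
  intro σ τ h
  have h1 := congrArg (fun M => Matrix.toBlocks₁₁ M.1) h
  simp only [permToSymplectic, MonoidHom.coe_mk, OneHom.coe_mk, Matrix.toBlocks_fromBlocks₁₁] at h1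
  have h2 : σ⁻¹ = τ⁻¹ := by
    ext i
    have h3 := congrFun (congrFun h1 i) (σ⁻¹ i)
    by_contra hne
    have hne' : τ⁻¹ i ≠ σ⁻¹ i := fun e => hne (by rw [e])
    simp [Equiv.Perm.permMatrix, PEquiv.toMatrix_apply, Equiv.toPEquiv_apply] at h3
    exact hne' h3
  exact inv_injective h2

/-- For `k ≥ 5` and `n ≥ (k - 1)(k - 3)`, the integral symplectic group
`Sp(2n, ℤ)` contains an element of order exactly `k`. -/
theorem symplectic_group_has_element_of_order_k_stable_range
    (k n : ℕ) (hk : 5 ≤ k) (hn : (k - 1) * (k - 3) ≤ n) :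
    ∃ M : Matrix.symplecticGroup (Fin n) ℤ, orderOf M = k := by
  have hkn : k ≤ n := by
    have : (k - 1) * 2 ≤ (k - 1) * (k - 3) := Nat.mul_le_mul_left _ (by omega)
    omega
  have h0 : orderOf (finRotate k) = k := by
    rw [(isCycle_finRotate_of_le (by omega : 2 ≤ k)).orderOf,
      support_finRotate_of_le (by omega), Finset.card_univ, Fintype.card_fin]
  refine ⟨permToSymplectic n
    (Equiv.Perm.viaEmbeddingHom (Fin.castLEEmb hkn) (finRotate k)), ?_⟩
  rw [orderOf_injective _ (permToSymplectic_injective n),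
    orderOf_injective _ (Equiv.Perm.viaEmbeddingHom_injective _), h0]
end
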